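/- arXiv:2012.10811 — 2 statements merged into one kernel-verified Lean document; each statement's English description precedes it below -/
import Mathlib

section
/- Consider the n-walker random walk with local memory on G with the initial rotor configuration ρ sampled from the IUD measure. Then exactly one of the following holds: p_rec(ρ) = 0 for IUD-almost every ρ, or p_rec(ρ) = 1 for IUD-almost every ρ. -/
/-!
Fix the local mechanisms and drive the walk by independent random maps `ω (v, k, ·)`, where
`ω (v, k, b)` has law `p_v(b, ·)`. For a given initial rotor configuration `ρ` these maps
determine at every vertex a stack of cards, the successive rotors shown there, and the walkers
read the stacks in order. Almost surely every stack shows every neighbour infinitely often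
(`ae_stack_infinite`).

The argument has four ingredients.

* An abelian property (`rec_of_rec`): for fixed stacks of this kind, recurrence depends neither
  on the starting positions nor on the turn order, as long as the order is fair. Transience of
  one run would give a finite final odometer, and conservation of walkers below that odometer
  contradicts recurrence of the other run. Hence the recurrence
  probability depends on neither (`prec_eq`).
* Placing all walkers at `v` and making one step shows that the recurrence probability is a
  harmonic function of the rotor at `v` for the local chain at `v`. That chain is irreducible on
  a finite set, so the maximum principle makes the function constant (`prec_update`), and
  finitely many rotors may be changed freely (`prec_congr_finset`).
* By the Markov property, conditioning on the first `t` steps changes the positions, the turn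
  order and finitely many rotors, hence not the recurrence probability. Recurrence is therefore
  independent of every cylinder event, and so of itself: for each rotor configuration its
  probability is `0` or `1` (`prec_zero_or_one`).
* The set of rotor configurations whose recurrence probability is `1` is invariant under finite
  changes, and the rotors are independent under the IUD measure, so Kolmogorov's zero-one law
  applies (`iud_zero_or_one`).
-/

open MeasureTheory Filter
open scoped ENNReal

namespace RWLM

variable {V : Type*}

/-- The state of an `n`-walker random walk with local memory:
the positions of the `n` walkers together with the current rotor configuration. -/
abbrev State (V : Type*) (n : ℕ) := (Fin n → V) × (V → V)

open Classical in
/-- The `m`-step transition probabilities of the local mechanism at `x`. -/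
noncomputable def mechPow (mech : V → V → V → ℝ≥0∞) (x : V) : ℕ → V → V → ℝ≥0∞
  | 0, a, b => if a = b then 1 else 0
  | m + 1, a, b => ∑' c, mech x a c * mechPow mech x m c b

/-- `mech` is a family of local mechanisms for the graph `G`: `mech x a b` is the
transition probability `p_x(a, b)` of the local Markov chain at `x`. Each row is a
probability distribution supported on the neighbors of `x`, and the chain is
irreducible on the (finite) set of neighbors of `x`. -/
structure IsMechanism (G : SimpleGraph V) (mech : V → V → V → ℝ≥0∞) : Prop where
  support : ∀ x a b, mech x a b ≠ 0 → G.Adj x b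
  total : ∀ x a, ∑' b, mech x a b = 1
  irreducible : ∀ x a b, G.Adj x a → G.Adj x b → ∃ m, 0 < mechPow mech x m a b

/-- `ρ` is a rotor configuration of `G`: `ρ x` is a neighbor of `x` for every `x`. -/
def IsRotor (G : SimpleGraph V) (ρ : V → V) : Prop := ∀ x, G.Adj x (ρ x)

/-- The walker that is active at the `(t+1)`-st step of the cyclic turn order. -/
def active (n : ℕ) (hn : 0 < n) (t : ℕ) : Fin n := ⟨t % n, Nat.mod_lt t hn⟩

open Classical in
/-- Update the state when walker `i` moves to `y`: the rotor at the vertex the walker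
leaves is set to `y`, and walker `i` moves to `y`. -/
noncomputable def apply' (n : ℕ) (s : State V n) (i : Fin n) (y : V) : State V n :=
  (Function.update s.1 i y, Function.update s.2 (s.1 i) y)

/-- The one-step transition probability of the RWLM: from state `s`, the active walker
`i` samples its next location `y` from the row of the local mechanism of its current
position indexed by the current rotor there. -/
def weight (mech : V → V → V → ℝ≥0∞) (n : ℕ) (s : State V n) (i : Fin n) (y : V) :
    ℝ≥0∞ :=
  mech (s.1 i) (s.2 (s.1 i)) y

/-- The deterministic reconstruction of the state of the `n`-walker RWLM (with initial
walker locations `x0` and initial rotor configuration `ρ`) from a trajectory. -/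
noncomputable def seq (n : ℕ) (hn : 0 < n) (x0 : Fin n → V) (ρ : V → V) (y : ℕ → V) :
    ℕ → State V n
  | 0 => (x0, ρ)
  | t + 1 => apply' n (seq n hn x0 ρ y t) (active n hn t) (y t)

/-- `μ` is the law of the `n`-walker RWLM with local mechanisms `mech`, initial walker
locations `x0` and initial rotor configuration `ρ`: the finite-dimensional
distributions are products of one-step transition probabilities. -/
def IsLaw [MeasurableSpace V] (mech : V → V → V → ℝ≥0∞) (n : ℕ) (hn : 0 < n)
    (x0 : Fin n → V) (ρ : V → V) (μ : Measure (ℕ → V)) : Prop :=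
  ∀ (t : ℕ) (c : ℕ → V),
    μ {y : ℕ → V | ∀ s < t, y s = c s} =
      ∏ s ∈ Finset.range t, weight mech n (seq n hn x0 ρ c s) (active n hn s) (c s)

/-- A trajectory is recurrent if every vertex is visited infinitely many times. -/
def Recurrent (n : ℕ) (hn : 0 < n) (x0 : Fin n → V) (ρ : V → V) (y : ℕ → V) : Prop :=
  ∀ v : V, {t : ℕ | ∃ i, (seq n hn x0 ρ y t).1 i = v}.Infinite

end RWLM

namespace RWLM

open Classical in
/-- `ν` is the IUD measure on rotor configurations of `G`: the rotors at distinct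
vertices are independent, and the rotor at `x` is uniform on the neighbors of `x`. -/
noncomputable def IsIUD [MeasurableSpace V] (G : SimpleGraph V) (hGlf : G.LocallyFinite)
    (ν : Measure (V → V)) : Prop :=
  ∀ (F : Finset V) (g : V → V),
    ν {ρ : V → V | ∀ x ∈ F, ρ x = g x} =
      ∏ x ∈ F, (if G.Adj x (g x) then ((@SimpleGraph.degree V G x (hGlf x) : ℝ≥0∞))⁻¹ else 0)

end RWLM

/-! ### Trajectories driven by stacks of cards -/

namespace RWLM

variable {V : Type*} {n : ℕ}

open Classical in
/-- Walker positions after `t` steps of the trajectory `y`, for an arbitrary turn order `a`. -/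
noncomputable def pos (a : ℕ → Fin n) (x : Fin n → V) (y : ℕ → V) : ℕ → Fin n → V
  | 0 => x
  | t + 1 => Function.update (pos a x y t) (a t) (y t)

/-- The vertex that the `t`-th step leaves. -/
noncomputable def src (a : ℕ → Fin n) (x : Fin n → V) (y : ℕ → V) (t : ℕ) : V :=
  pos a x y t (a t)

open Classical in
/-- The odometer: how many of the first `t` steps leave a given vertex. -/
noncomputable def odo (a : ℕ → Fin n) (x : Fin n → V) (y : ℕ → V) : ℕ → V → ℕ
  | 0 => 0
  | t + 1 => Function.update (odo a x y t) (src a x y t) (odo a x y t (src a x y t) + 1)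

open Classical in
/-- The rotor configuration after `t` steps. -/
noncomputable def rot (a : ℕ → Fin n) (x : Fin n → V) (ρ : V → V) (y : ℕ → V) : ℕ → V → V
  | 0 => ρ
  | t + 1 => Function.update (rot a x ρ y t) (src a x y t) (y t)

/-- The trajectory `y` follows the stacks of cards `S`: the `k`-th departure from `v`
(counted from `0`) goes to `S v k`. -/
def Follows (S : V → ℕ → V) (a : ℕ → Fin n) (x : Fin n → V) (y : ℕ → V) : Prop :=
  ∀ t, y t = S (src a x y t) (odo a x y t (src a x y t))

/-- A turn order in which every walker is active infinitely often. -/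
def Fair (a : ℕ → Fin n) : Prop := ∀ i N, ∃ t, N ≤ t ∧ a t = i

/-- Every vertex is occupied at infinitely many times. -/
def Rec (a : ℕ → Fin n) (x : Fin n → V) (y : ℕ → V) : Prop :=
  ∀ v : V, {t : ℕ | ∃ i, pos a x y t i = v}.Infinite

open Classical in
/-- The number of walkers at `v`. -/
noncomputable def cnt (x : Fin n → V) (v : V) : ℕ := ∑ i, if x i = v then 1 else 0

open Classical in
lemma cnt_update (x : Fin n → V) (i : Fin n) (z v : V) :
    cnt (Function.update x i z) v + (if x i = v then 1 else 0)
      = cnt x v + (if z = v then 1 else 0) := by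
  unfold cnt
  rw [← Finset.add_sum_erase Finset.univ (fun j => if x j = v then 1 else 0) (Finset.mem_univ i),
    ← Finset.add_sum_erase Finset.univ (fun j => if Function.update x i z j = v then 1 else 0)
      (Finset.mem_univ i)]
  have : ∑ j ∈ Finset.univ.erase i, (if Function.update x i z j = v then 1 else 0)
      = ∑ j ∈ Finset.univ.erase i, (if x j = v then 1 else 0) := by
    refine Finset.sum_congr rfl fun j hj => ?_
    rw [Function.update_of_ne (Finset.ne_of_mem_erase hj)]
  rw [this]
  simp only [Function.update_self]
  ring

lemma cnt_pos_iff (x : Fin n → V) (v : V) : 0 < cnt x v ↔ ∃ i, x i = v := by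
  classical
  unfold cnt
  rw [Nat.pos_iff_ne_zero, Ne, Finset.sum_eq_zero_iff]
  simp

lemma cnt_le (x : Fin n → V) (v : V) : cnt x v ≤ n := by
  classical
  unfold cnt
  calc _ ≤ ∑ i : Fin n, 1 := Finset.sum_le_sum fun i _ => by split_ifs <;> simp
    _ = n := by simp

lemma sum_cnt (x : Fin n → V) (F : Finset V) (h : ∀ i, x i ∈ F) : ∑ v ∈ F, cnt x v = n := by
  classical
  unfold cnt
  rw [Finset.sum_comm]
  simp [h]

lemma sum_cnt_le (x : Fin n → V) (F : Finset V) : ∑ v ∈ F, cnt x v ≤ n := by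
  classical
  unfold cnt
  rw [Finset.sum_comm]
  calc _ ≤ ∑ i : Fin n, 1 := Finset.sum_le_sum fun i _ => by
        rw [Finset.sum_ite_eq]; split_ifs <;> simp
    _ = n := by simp

section Stacks

variable (G : SimpleGraph V) [G.LocallyFinite]

open Classical in
/-- The number of cards pointing to `v` among the first `u w` cards at each `w`. -/
noncomputable def inflow (S : V → ℕ → V) (u : V → ℕ) (v : V) : ℕ :=
  ∑ w ∈ G.neighborFinset v, ((Finset.range (u w)).filter fun k => S w k = v).card

open Classical in
lemma inflow_update (S : V → ℕ → V) (hS : ∀ v k, G.Adj v (S v k)) (u : V → ℕ) (z v : V) :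
    inflow G S (Function.update u z (u z + 1)) v
      = inflow G S u v + (if S z (u z) = v then 1 else 0) := by
  unfold inflow
  have key : ∀ w, ((Finset.range (Function.update u z (u z + 1) w)).filter
      fun k => S w k = v).card
      = ((Finset.range (u w)).filter fun k => S w k = v).card
        + if w = z then (if S z (u z) = v then 1 else 0) else 0 := by
    intro w
    by_cases hw : w = z
    · subst hw
      simp only [Function.update_self, Finset.range_add_one, Finset.filter_insert]
      split_ifs
      · rw [Finset.card_insert_of_notMem (by simp)]
      · simp
    · simp [hw]
  rw [Finset.sum_congr rfl fun w _ => key w, Finset.sum_add_distrib, Finset.sum_ite_eq']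
  congr 1
  by_cases h : S z (u z) = v
  · have : G.Adj v z := by rw [← h]; exact (hS _ _).symm
    simp [this]
  · simp [h]

lemma inflow_mono (S : V → ℕ → V) {u u' : V → ℕ} (h : ∀ w, u w ≤ u' w) (v : V) :
    inflow G S u v ≤ inflow G S u' v := by
  classical
  unfold inflow
  exact Finset.sum_le_sum fun w _ => Finset.card_le_card
    (Finset.filter_subset_filter _ (by simpa using h w))

lemma inflow_congr (S : V → ℕ → V) {u u' : V → ℕ} {v : V} (h : ∀ w, G.Adj v w → u w = u' w) :
    inflow G S u v = inflow G S u' v := by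
  classical
  unfold inflow
  refine Finset.sum_congr rfl fun w hw => ?_
  rw [h w (by simpa using hw)]

variable {a : ℕ → Fin n} {x : Fin n → V} {y : ℕ → V} {S : V → ℕ → V}

lemma odo_mono (a : ℕ → Fin n) (x : Fin n → V) (y : ℕ → V) (v : V) :
    Monotone fun t => odo a x y t v := by
  classical
  refine monotone_nat_of_le_succ fun t => ?_
  simp only [odo, Function.update_apply]
  split_ifs with h
  · rw [h]; omega
  · rfl

/-- Conservation of walkers: departures plus present walkers equal initial walkers plus
arrivals. -/
lemma conservation (hS : ∀ v k, G.Adj v (S v k)) (hy : Follows S a x y) (t : ℕ) (v : V) :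
    odo a x y t v + cnt (pos a x y t) v = cnt x v + inflow G S (odo a x y t) v := by
  classical
  induction t with
  | zero => simp [odo, pos, inflow]
  | succ t ih =>
    have h1 := cnt_update (pos a x y t) (a t) (y t) v
    have h2 := inflow_update G S hS (odo a x y t) (src a x y t) v
    rw [← hy t] at h2
    simp only [odo, pos]
    rw [h2]
    have h3 : Function.update (odo a x y t) (src a x y t) (odo a x y t (src a x y t) + 1) v
        = odo a x y t v + if src a x y t = v then 1 else 0 := by
      rw [Function.update_apply]
      split_ifs with p q q
      · rw [p]
      · exact absurd p.symm q
      · exact absurd q.symm p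
      · rfl
    rw [h3]
    change _ + (if src a x y t = v then 1 else 0) = _ at h1
    omega

/-- A walker standing at `v` eventually leaves it, because the turn order is fair. -/
lemma exists_odo_lt (ha : Fair a) {t : ℕ} {i : Fin n} {v : V} (h : pos a x y t i = v) :
    ∃ t', t ≤ t' ∧ odo a x y t v < odo a x y t' v := by
  classical
  have hex : ∃ d, a (t + d) = i := by
    obtain ⟨s, hs, e⟩ := ha i t
    exact ⟨s - t, by rw [Nat.add_sub_cancel' hs, e]⟩
  have hd := Nat.find_spec hex
  have hmin := fun m => Nat.find_min (m := m) hex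
  set d := Nat.find hex
  have stay : ∀ m ≤ d, pos a x y (t + m) i = v := by
    intro m hm
    induction m with
    | zero => exact h
    | succ m ih =>
      rw [← Nat.add_assoc]
      simp only [pos]
      rw [Function.update_of_ne]
      · exact ih (by omega)
      · exact fun e => hmin m (by omega) e.symm
  refine ⟨t + d + 1, by omega, ?_⟩
  have hsrc : src a x y (t + d) = v := by
    unfold src
    rw [hd, stay d le_rfl]
  have := odo_mono a x y v (show t ≤ t + d by omega)
  simp only [odo, hsrc, Function.update_self] at this ⊢
  omega

/-- Under a fair turn order, recurrence means that the odometer diverges everywhere. -/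
lemma rec_iff_odo (ha : Fair a) : Rec a x y ↔ ∀ v N, ∃ t, N ≤ odo a x y t v := by
  classical
  refine forall_congr' fun v => ?_
  constructor
  · intro h N
    induction N with
    | zero => exact ⟨0, by omega⟩
    | succ N ih =>
      obtain ⟨t, ht⟩ := ih
      obtain ⟨s, ⟨i, hi⟩, hs⟩ := h.exists_gt t
      obtain ⟨t', _, h'⟩ := exists_odo_lt ha hi
      have := odo_mono a x y v hs.le
      exact ⟨t', by simp only at this; omega⟩
  · intro h hfin
    obtain ⟨B, hB⟩ := hfin.bddAbove
    obtain ⟨C, hC⟩ : ∃ C, C = B + 1 := ⟨_, rfl⟩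
    have stay : ∀ m, odo a x y (C + m) v = odo a x y C v := by
      intro m
      induction m with
      | zero => rfl
      | succ m ih =>
        rw [← Nat.add_assoc]
        simp only [odo]
        rw [Function.update_of_ne, ih]
        intro e
        have : C + m ≤ B := hB ⟨a (C + m), e.symm⟩
        omega
    obtain ⟨t, ht⟩ := h (odo a x y C v + 1)
    have h1 := odo_mono a x y v (show t ≤ C + t by omega)
    simp only [stay t] at h1
    omega

/-- If every stack contains every neighbour infinitely often, the odometer is either bounded
everywhere or unbounded everywhere. -/
lemma odo_bounded_of_not_rec (hG : G.Connected) (hS : ∀ v k, G.Adj v (S v k))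
    (hinf : ∀ v b, G.Adj v b → {k | S v k = b}.Infinite) (ha : Fair a)
    (hy : Follows S a x y) (hr : ¬ Rec a x y) (v : V) : ∃ N, ∀ t, odo a x y t v ≤ N := by
  classical
  have step : ∀ w b, G.Adj w b → (∀ N, ∃ t, N ≤ odo a x y t w) →
      ∀ N, ∃ t, N ≤ odo a x y t b := by
    intro w b hwb hw N
    obtain ⟨T, hT, hc⟩ := (hinf w b hwb).exists_subset_card_eq (N + n)
    obtain ⟨t, ht⟩ := hw (T.sup id + 1)
    refine ⟨t, ?_⟩
    have h1 := conservation G hS hy t b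
    have h2 := cnt_le (pos a x y t) b
    have h3 : T.card ≤ inflow G S (odo a x y t) b := by
      unfold inflow
      refine le_trans (Finset.card_le_card ?_) (Finset.single_le_sum
        (f := fun w => ((Finset.range (odo a x y t w)).filter fun k => S w k = b).card)
        (fun _ _ => Nat.zero_le _) (show w ∈ G.neighborFinset b by simpa using hwb.symm))
      intro k hk
      have : k ≤ T.sup id := Finset.le_sup (f := id) hk
      simp only [Finset.mem_filter, Finset.mem_range]
      exact ⟨by omega, hT hk⟩
    omega
  by_contra! hv
  refine hr ((rec_iff_odo ha).2 fun w => ?_)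
  obtain ⟨p⟩ := hG.preconnected v w
  have hv' : ∀ N, ∃ t, N ≤ odo a x y t v := fun N => (hv N).imp fun t h => h.le
  clear hv
  induction p with
  | nil => exact hv'
  | cons h p ih => exact ih (step _ _ h hv')

/-- Two runs from different starting positions through the same stacks: if one is recurrent,
so is the other. If the second run were transient, its final odometer `U` would be finite.
Departures of the first run within the first `U v` cards at `v` are a flow from
some positions `p` to the present positions, `p` moving only with the departures that exceed
`U`. Once all cards below `U` at the starting points `x'` of the second run are
used, counting walkers forces `p` to be a rearrangement of `x'` and no walker of the
first run to be at a point of `x'` any more. -/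
theorem rec_of_rec (hn : 0 < n) (hG : G.Connected) (hS : ∀ v k, G.Adj v (S v k))
    (hinf : ∀ v b, G.Adj v b → {k | S v k = b}.Infinite) (ha : Fair a)
    (hy : Follows S a x y) (hr : Rec a x y)
    {a' : ℕ → Fin n} {x' : Fin n → V} {y' : ℕ → V} (ha' : Fair a')
    (hy' : Follows S a' x' y') : Rec a' x' y' := by
  classical
  by_contra hr'
  have hb := odo_bounded_of_not_rec G hG hS hinf ha' hy' hr'
  have hlim : ∀ v, ∃ T, ∀ t, T ≤ t → odo a' x' y' t v = odo a' x' y' T v := by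
    intro v
    obtain ⟨N, hN⟩ := hb v
    have hf : (Set.range fun t => odo a' x' y' t v).Finite :=
      (Set.finite_Iic N).subset (by rintro _ ⟨t, rfl⟩; exact hN t)
    obtain ⟨_, ⟨T, rfl⟩, hm⟩ := hf.exists_maximal ⟨_, ⟨0, rfl⟩⟩
    exact ⟨T, fun t ht => le_antisymm
      (hm ⟨t, rfl⟩ (odo_mono a' x' y' v ht)) (odo_mono a' x' y' v ht)⟩
  choose T hT using hlim
  set U : V → ℕ := fun v => odo a' x' y' (T v) v with hU
  -- The final odometer balances the walkers of the second run, which all escape.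
  have hbal : ∀ v, U v = cnt x' v + inflow G S U v := by
    intro v
    set t := max (T v) ((G.neighborFinset v).sup T) with ht
    have h1 := conservation G hS hy' t v
    have h2 : inflow G S (odo a' x' y' t) v = inflow G S U v :=
      inflow_congr G S fun w hw => hT w t
        (le_trans (Finset.le_sup (f := T) (by simpa using hw)) (le_max_right _ _))
    have h3 : odo a' x' y' t v = U v := hT v t (le_max_left _ _)
    have h4 : cnt (pos a' x' y' t) v = 0 := by
      by_contra h0
      obtain ⟨i, hi⟩ := (cnt_pos_iff _ _).1 (Nat.pos_of_ne_zero h0)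
      obtain ⟨s, hs, hlt⟩ := exists_odo_lt ha' hi
      have := hT v s (le_trans (le_max_left _ _) hs)
      rw [h3, this] at hlt
      exact lt_irrefl _ hlt
    omega
  set m : ℕ → V → ℕ := fun t v => min (odo a x y t v) (U v) with hm
  have inv : ∀ t, ∃ p : Fin n → V, ∀ v,
      m t v + cnt (pos a x y t) v = inflow G S (m t) v + cnt p v := by
    intro t
    induction t with
    | zero => exact ⟨x, fun v => by simp [hm, odo, pos, inflow]⟩
    | succ t ih =>
      obtain ⟨p, hp⟩ := ih
      set z := src a x y t with hz
      have hpos : ∀ v, cnt (pos a x y (t + 1)) v + (if z = v then 1 else 0)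
          = cnt (pos a x y t) v + (if y t = v then 1 else 0) :=
        fun v => cnt_update (pos a x y t) (a t) (y t) v
      have hyt : y t = S z (odo a x y t z) := hy t
      by_cases hlt : odo a x y t z < U z
      · refine ⟨p, fun v => ?_⟩
        have hm' : m (t + 1) = Function.update (m t) z (m t z + 1) := by
          funext v
          simp only [hm, odo, ← hz, Function.update_apply]
          split_ifs with e
          · rw [e]; omega
          · rfl
        have hmz : m t z = odo a x y t z := min_eq_left hlt.le
        have h2 := inflow_update G S hS (m t) z v
        rw [← hm', hmz, ← hyt] at h2
        have h3 : m (t + 1) v = m t v + if z = v then 1 else 0 := by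
          rw [hm', Function.update_apply]
          split_ifs with e e' e'
          · rw [e]
          · exact absurd e.symm e'
          · exact absurd e'.symm e
          · rfl
        have := hp v
        have := hpos v
        omega
      · have hm' : m (t + 1) = m t := by
          funext v
          simp only [hm, odo, ← hz, Function.update_apply]
          split_ifs with e
          · subst e; omega
          · rfl
        have h1 := hp z
        have h2 : m t z = U z := min_eq_right (not_lt.1 hlt)
        have h3 := inflow_mono G S (u := m t) (u' := U) (fun w => min_le_right _ _) z
        have h4 := hbal z
        have h5 : 0 < cnt (pos a x y t) z := (cnt_pos_iff _ _).2 ⟨a t, rfl⟩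
        obtain ⟨j, hj⟩ := (cnt_pos_iff p z).1 (by omega)
        refine ⟨Function.update p j (y t), fun v => ?_⟩
        have h6 := cnt_update p j (y t) v
        rw [hj] at h6
        rw [hm']
        have := hp v
        have := hpos v
        omega
  -- After time `B` the first run has exhausted `U` at all points of `x'`.
  have hex : ∀ i, ∃ t, U (x' i) ≤ odo a x y t (x' i) := fun i =>
    (rec_iff_odo ha).1 hr (x' i) _
  choose τ hτ using hex
  set B := Finset.univ.sup τ with hB
  have empty : ∀ t, B ≤ t → ∀ i, pos a x y t i ≠ x' ⟨0, hn⟩ := by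
    intro t ht i hi
    obtain ⟨p, hp⟩ := inv t
    set F := Finset.univ.image x' with hF
    have hge : ∀ v ∈ F, cnt x' v + cnt (pos a x y t) v ≤ cnt p v := by
      intro v hv
      obtain ⟨j, -, rfl⟩ := Finset.mem_image.1 hv
      have h1 : m t (x' j) = U (x' j) := min_eq_right ((hτ j).trans
        (odo_mono a x y _ ((Finset.le_sup (Finset.mem_univ j)).trans ht)))
      have h3 := inflow_mono G S (u := m t) (u' := U) (fun w => min_le_right _ _) (x' j)
      have h4 := hbal (x' j)
      have := hp (x' j)
      omega
    have h1 := Finset.sum_le_sum hge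
    rw [Finset.sum_add_distrib, sum_cnt x' F (by simp [hF])] at h1
    have h2 := sum_cnt_le p F
    have h3 : cnt (pos a x y t) (x' ⟨0, hn⟩) ≤ ∑ v ∈ F, cnt (pos a x y t) v :=
      Finset.single_le_sum (f := fun v => cnt (pos a x y t) v) (fun _ _ => Nat.zero_le _)
        (by simp [hF])
    have h4 := (cnt_pos_iff (pos a x y t) (x' ⟨0, hn⟩)).2 ⟨i, hi⟩
    omega
  obtain ⟨t, ⟨i, hi⟩, ht⟩ := (hr (x' ⟨0, hn⟩)).exists_gt B
  exact empty t ht.le i hi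

end Stacks

end RWLM

/-! ### Random stacks realising the walk -/

namespace RWLM

variable {V : Type*} {n : ℕ}

lemma exists_follows (S : V → ℕ → V) (a : ℕ → Fin n) (x : Fin n → V) :
    ∃ y, Follows S a x y := by
  classical
  let st : ℕ → (Fin n → V) × (V → ℕ) := fun t => Nat.rec (x, 0)
    (fun t s => (Function.update s.1 (a t) (S (s.1 (a t)) (s.2 (s.1 (a t)))),
      Function.update s.2 (s.1 (a t)) (s.2 (s.1 (a t)) + 1))) t
  let y : ℕ → V := fun t => S ((st t).1 (a t)) ((st t).2 ((st t).1 (a t)))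
  have key : ∀ t, pos a x y t = (st t).1 ∧ odo a x y t = (st t).2 := by
    intro t
    induction t with
    | zero => exact ⟨rfl, rfl⟩
    | succ t ih =>
      obtain ⟨h1, h2⟩ := ih
      constructor
      · simp only [pos, h1]; rfl
      · simp only [odo, src, h1, h2]; rfl
  refine ⟨y, fun t => ?_⟩
  rw [src, (key t).1, (key t).2]

/-- The rotors shown at `v` when the chain started at `ρ v` uses, for its `k`-th transition,
the random map `b ↦ ω (v, k, b)`. -/
def stack (ω : V × ℕ × V → V) (ρ : V → V) (v : V) : ℕ → V
  | 0 => ρ v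
  | k + 1 => ω (v, k, stack ω ρ v k)

/-- The trajectory driven by the random maps `ω`. -/
noncomputable def traj (a : ℕ → Fin n) (x : Fin n → V) (ρ : V → V) (ω : V × ℕ × V → V) :
    ℕ → V :=
  (exists_follows (fun v k => stack ω ρ v (k + 1)) a x).choose

lemma traj_follows (a : ℕ → Fin n) (x : Fin n → V) (ρ : V → V) (ω : V × ℕ × V → V) :
    Follows (fun v k => stack ω ρ v (k + 1)) a x (traj a x ρ ω) :=
  (exists_follows (fun v k => stack ω ρ v (k + 1)) a x).choose_spec

/-- The coordinate of `ω` used at step `s` of the trajectory `c`. -/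
noncomputable def idx (a : ℕ → Fin n) (x : Fin n → V) (ρ : V → V) (c : ℕ → V) (s : ℕ) :
    V × ℕ × V :=
  (src a x c s, odo a x c s (src a x c s), rot a x ρ c s (src a x c s))

lemma pos_odo_rot_congr (a : ℕ → Fin n) (x : Fin n → V) (ρ : V → V) {y c : ℕ → V} {t : ℕ}
    (h : ∀ s < t, y s = c s) :
    pos a x y t = pos a x c t ∧ odo a x y t = odo a x c t ∧ rot a x ρ y t = rot a x ρ c t := by
  induction t with
  | zero => exact ⟨rfl, rfl, rfl⟩
  | succ t ih =>
    obtain ⟨h1, h2, h3⟩ := ih fun s hs => h s (by omega)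
    have h4 := h t (by omega)
    refine ⟨?_, ?_, ?_⟩
    · simp only [pos, h1, h4]
    · simp only [odo, src, h1, h2]
    · simp only [rot, src, h1, h3, h4]

lemma idx_congr (a : ℕ → Fin n) (x : Fin n → V) (ρ : V → V) {y c : ℕ → V} {t : ℕ}
    (h : ∀ s < t, y s = c s) : idx a x ρ y t = idx a x ρ c t := by
  obtain ⟨h1, h2, h3⟩ := pos_odo_rot_congr a x ρ h
  simp only [idx, src, h1, h2, h3]

/-- Each step uses a fresh coordinate, since the odometer at the vertex left increases. -/
lemma idx_injective (a : ℕ → Fin n) (x : Fin n → V) (ρ : V → V) (c : ℕ → V) :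
    Function.Injective (idx a x ρ c) := by
  classical
  have key : ∀ s s', s < s' → idx a x ρ c s ≠ idx a x ρ c s' := by
    intro s s' hs e
    simp only [idx, Prod.mk.injEq] at e
    obtain ⟨e1, e2, -⟩ := e
    rw [← e1] at e2
    have h := odo_mono a x c (src a x c s) (show s + 1 ≤ s' from hs)
    simp only [odo, Function.update_self] at h
    omega
  intro s s' e
  rcases lt_trichotomy s s' with h | h | h
  · exact absurd e (key _ _ h)
  · exact h
  · exact absurd e.symm (key _ _ h)

lemma rot_traj (a : ℕ → Fin n) (x : Fin n → V) (ρ : V → V) (ω : V × ℕ × V → V) (t : ℕ) (v : V) :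
    rot a x ρ (traj a x ρ ω) t v = stack ω ρ v (odo a x (traj a x ρ ω) t v) := by
  classical
  induction t generalizing v with
  | zero => rfl
  | succ t ih =>
    simp only [rot, odo, Function.update_apply]
    split_ifs with h
    · rw [traj_follows a x ρ ω t, h]
    · exact ih v

lemma traj_eq (a : ℕ → Fin n) (x : Fin n → V) (ρ : V → V) (ω : V × ℕ × V → V) (t : ℕ) :
    traj a x ρ ω t = ω (idx a x ρ (traj a x ρ ω) t) := by
  rw [idx, rot_traj]
  exact traj_follows a x ρ ω t

/-- The set of trajectories agreeing with `c` for `t` steps. -/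
def cyl (t : ℕ) (c : ℕ → V) : Set (ℕ → V) := {y | ∀ s < t, y s = c s}

lemma traj_mem_cyl (a : ℕ → Fin n) (x : Fin n → V) (ρ : V → V) (ω : V × ℕ × V → V) (t : ℕ)
    (c : ℕ → V) : traj a x ρ ω ∈ cyl t c ↔ ∀ s < t, ω (idx a x ρ c s) = c s := by
  constructor
  · intro h s hs
    rw [← idx_congr a x ρ (fun r hr => h r (hr.trans hs)), ← traj_eq a x ρ ω s]
    exact h s hs
  · intro h s
    induction s using Nat.strong_induction_on with
    | _ s ih =>
      intro hs
      rw [traj_eq, idx_congr a x ρ (fun r hr => ih r hr (hr.trans hs))]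
      exact h s hs

lemma isPiSystem_cyl : IsPiSystem {A : Set (ℕ → V) | ∃ t c, A = cyl t c} := by
  rintro _ ⟨t, c, rfl⟩ _ ⟨t', c', rfl⟩ ⟨z, hz, hz'⟩
  refine ⟨max t t', z, ?_⟩
  ext y
  constructor
  · rintro ⟨h, h'⟩ s hs
    rcases lt_max_iff.1 hs with hs | hs
    · rw [h s hs, hz s hs]
    · rw [h' s hs, hz' s hs]
  · intro h
    exact ⟨fun s hs => by rw [h s (lt_max_of_lt_left hs), hz s hs],
      fun s hs => by rw [h s (lt_max_of_lt_right hs), hz' s hs]⟩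

/-- Moves of the local chain at `v` with positive probability leading from any neighbour to
`b` in a bounded number of steps. -/
lemma exists_route {G : SimpleGraph V} [G.LocallyFinite] {mech : V → V → V → ℝ≥0∞}
    (hmech : IsMechanism G mech) {v b : V} (hb : G.Adj v b) :
    ∃ (f : V → V) (L : ℕ), (∀ a, G.Adj v a → mech v a (f a) ≠ 0) ∧
      ∀ a, G.Adj v a → ∃ j ≤ L, f^[j] a = b := by
  classical
  have hmv : ∀ a, ∃ c, mech v a c ≠ 0 := by
    intro a
    by_contra! h
    have := hmech.total v a
    simp [h] at this
  have hd : ∀ a, ∃ c, mech v a c ≠ 0 ∧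
      ∀ m, mechPow mech v (m + 1) a b ≠ 0 → (∀ k ≤ m, mechPow mech v k a b = 0) →
        mechPow mech v m c b ≠ 0 := by
    intro a
    by_cases h : ∃ m, mechPow mech v (m + 1) a b ≠ 0 ∧ ∀ k ≤ m, mechPow mech v k a b = 0
    · obtain ⟨m, hm, hm'⟩ := h
      have hm2 := hm
      simp only [mechPow, ne_eq, ENNReal.tsum_eq_zero, not_forall, mul_eq_zero, not_or] at hm2
      obtain ⟨c, hc, hc'⟩ := hm2
      refine ⟨c, hc, fun m' h1 h2 => ?_⟩
      have : m' = m := by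
        by_contra hne
        rcases lt_or_gt_of_ne hne with h | h
        · exact h1 (hm' _ h)
        · exact hm (h2 _ h)
      rwa [this]
    · obtain ⟨c, hc⟩ := hmv a
      exact ⟨c, hc, fun m h1 h2 => absurd ⟨m, h1, h2⟩ h⟩
  choose f hf hf' using hd
  have hreach : ∀ m a, mechPow mech v m a b ≠ 0 → ∃ j ≤ m, f^[j] a = b := by
    intro m
    induction m using Nat.strong_induction_on with
    | _ m ih =>
      intro a h
      by_cases hmin : ∃ k < m, mechPow mech v k a b ≠ 0
      · obtain ⟨k, hk, h'⟩ := hmin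
        obtain ⟨j, hj, e⟩ := ih k hk a h'
        exact ⟨j, by omega, e⟩
      · push Not at hmin
        cases m with
        | zero =>
          refine ⟨0, le_rfl, ?_⟩
          by_contra hne
          exact h (by simpa [mechPow] using hne)
        | succ m =>
          obtain ⟨j, hj, e⟩ := ih m (by omega) (f a) (hf' a m h fun k hk => hmin k (by omega))
          exact ⟨j + 1, by omega, e⟩
  have hex : ∀ a, ∃ m, G.Adj v a → mechPow mech v m a b ≠ 0 := by
    intro a
    by_cases h : G.Adj v a
    · obtain ⟨m, hm⟩ := hmech.irreducible v a b h hb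
      exact ⟨m, fun _ => hm.ne'⟩
    · exact ⟨0, fun h' => absurd h' h⟩
  choose M hM using hex
  refine ⟨f, (G.neighborFinset v).sup M, fun a _ => hf a, fun a ha => ?_⟩
  obtain ⟨j, hj, e⟩ := hreach _ a (hM a ha)
  exact ⟨j, hj.trans (Finset.le_sup (f := M) (by simpa using ha)), e⟩

section Measures

variable [MeasurableSpace V] [DiscreteMeasurableSpace V] [Countable V]

lemma measurableSet_cyl (t : ℕ) (c : ℕ → V) : MeasurableSet (cyl t c) := by
  have : cyl t c = ⋂ s, ⋂ (_ : s < t), (fun y : ℕ → V => y s) ⁻¹' {c s} := by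
    ext y; simp [cyl]
  rw [this]
  exact MeasurableSet.iInter fun s => MeasurableSet.iInter fun _ =>
    measurable_pi_apply s (MeasurableSet.singleton _)

lemma generateFrom_cyl : (MeasurableSpace.pi : MeasurableSpace (ℕ → V))
    = MeasurableSpace.generateFrom {A : Set (ℕ → V) | ∃ t c, A = cyl t c} := by
  apply le_antisymm
  · refine iSup_le fun s => ?_
    rw [← measurable_iff_comap_le]
    refine @measurable_to_countable' _ _ _ _ (_) _ fun v => ?_
    have : (fun y : ℕ → V => y s) ⁻¹' {v} = ⋃ (l : Fin (s + 1) → V),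
        ⋃ (_ : l (Fin.last s) = v),
          cyl (s + 1) (fun k => if h : k < s + 1 then l ⟨k, h⟩ else v) := by
      ext y
      simp only [Set.mem_preimage, Set.mem_singleton_iff, Set.mem_iUnion, exists_prop]
      constructor
      · intro h
        refine ⟨fun k => y k, h, fun r hr => ?_⟩
        simp [hr]
      · rintro ⟨l, hl, hy⟩
        have := hy s (by omega)
        simp only [Nat.lt_succ_self, dite_true] at this
        rw [this, ← hl]
        rfl
    rw [this]
    refine MeasurableSet.iUnion fun l => MeasurableSet.iUnion fun _ => ?_
    exact MeasurableSpace.measurableSet_generateFrom ⟨_, _, rfl⟩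
  · refine MeasurableSpace.generateFrom_le ?_
    rintro _ ⟨t, c, rfl⟩
    exact measurableSet_cyl t c

lemma measurableSet_rec (a : ℕ → Fin n) (x : Fin n → V) :
    MeasurableSet {y : ℕ → V | Rec a x y} := by
  classical
  have hpos : ∀ t i, Measurable fun y : ℕ → V => pos a x y t i := by
    intro t
    induction t with
    | zero => exact fun i => measurable_const
    | succ t ih =>
      intro i
      by_cases h : i = a t
      · subst h
        simpa [pos] using measurable_pi_apply t
      · simpa [pos, Function.update_of_ne h] using ih i
  have : {y : ℕ → V | Rec a x y} = ⋂ v : V, ⋂ N : ℕ, ⋃ t : ℕ, ⋃ (_ : N ≤ t), ⋃ i,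
      (fun y : ℕ → V => pos a x y t i) ⁻¹' {v} := by
    ext y
    simp only [Rec, Set.mem_ofPred_eq, Set.mem_iInter, Set.mem_iUnion, Set.mem_preimage,
      Set.mem_singleton_iff, exists_prop]
    refine forall_congr' fun v => ?_
    rw [← Nat.frequently_atTop_iff_infinite, Filter.frequently_atTop]
  rw [this]
  exact MeasurableSet.iInter fun v => MeasurableSet.iInter fun N => MeasurableSet.iUnion fun t =>
    MeasurableSet.iUnion fun _ => MeasurableSet.iUnion fun i =>
      hpos t i (MeasurableSet.singleton _)

variable {G : SimpleGraph V} {mech : V → V → V → ℝ≥0∞} (hmech : IsMechanism G mech)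

/-- The row `p_v(b, ·)` of a local mechanism. -/
noncomputable def row (hmech : IsMechanism G mech) (v b : V) : PMF V :=
  ⟨mech v b, by rw [← hmech.total v b]; exact ENNReal.summable.hasSum⟩

/-- The law of the random maps: all `ω (v, k, b)` are independent, with law `p_v(b, ·)`. -/
noncomputable def mapsLaw (hmech : IsMechanism G mech) : Measure (V × ℕ × V → V) :=
  Measure.infinitePi fun i => (row hmech i.1 i.2.2).toMeasure

instance : IsProbabilityMeasure (mapsLaw hmech) := by
  unfold mapsLaw; infer_instance

lemma mapsLaw_cyl (B : Finset (V × ℕ × V)) (e : V × ℕ × V → V) :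
    mapsLaw hmech {ω | ∀ i ∈ B, ω i = e i} = ∏ i ∈ B, mech i.1 i.2.2 (e i) := by
  have : {ω : V × ℕ × V → V | ∀ i ∈ B, ω i = e i} = (B : Set (V × ℕ × V)).pi fun i => {e i} := by
    ext ω; simp [Set.mem_pi]
  rw [this, mapsLaw, Measure.infinitePi_pi _ fun i _ => MeasurableSet.singleton _]
  refine Finset.prod_congr rfl fun i _ => ?_
  rw [PMF.toMeasure_apply_singleton _ _ (MeasurableSet.singleton _)]
  rfl

lemma measurable_traj (a : ℕ → Fin n) (x : Fin n → V) (ρ : V → V) :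
    Measurable (traj a x ρ) := by
  rw [generateFrom_cyl]
  refine measurable_generateFrom ?_
  rintro _ ⟨t, c, rfl⟩
  have : traj a x ρ ⁻¹' cyl t c = ⋂ s, ⋂ (_ : s < t),
      (fun ω : V × ℕ × V → V => ω (idx a x ρ c s)) ⁻¹' {c s} := by
    ext ω; simp [traj_mem_cyl]
  rw [this]
  exact MeasurableSet.iInter fun s => MeasurableSet.iInter fun _ =>
    measurable_pi_apply _ (MeasurableSet.singleton _)

/-- The law of the walk with turn order `a` started from `(x, ρ)`. -/
noncomputable def law (hmech : IsMechanism G mech) (a : ℕ → Fin n) (x : Fin n → V) (ρ : V → V) :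
    Measure (ℕ → V) := (mapsLaw hmech).map (traj a x ρ)

instance (a : ℕ → Fin n) (x : Fin n → V) (ρ : V → V) :
    IsProbabilityMeasure (law hmech a x ρ) :=
  Measure.isProbabilityMeasure_map (measurable_traj a x ρ).aemeasurable

lemma law_cyl (a : ℕ → Fin n) (x : Fin n → V) (ρ : V → V) (t : ℕ) (c : ℕ → V) :
    law hmech a x ρ (cyl t c)
      = ∏ s ∈ Finset.range t, mech (src a x c s) (rot a x ρ c s (src a x c s)) (c s) := by
  classical
  rw [law, Measure.map_apply (measurable_traj a x ρ) (measurableSet_cyl t c)]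
  have hinj := idx_injective a x ρ c
  have : traj a x ρ ⁻¹' cyl t c = {ω | ∀ i ∈ (Finset.range t).image (idx a x ρ c),
      ω i = c (Function.invFun (idx a x ρ c) i)} := by
    ext ω
    simp only [Set.mem_preimage, traj_mem_cyl, Set.mem_ofPred_eq, Finset.mem_image,
      Finset.mem_range, forall_exists_index, and_imp, forall_apply_eq_imp_iff₂,
      Function.leftInverse_invFun hinj _]
  rw [this, mapsLaw_cyl, Finset.prod_image fun _ _ _ _ h => hinj h]
  simp only [Function.leftInverse_invFun hinj _]
  rfl

/-- Probability of recurrence from `(x, ρ)` with turn order `a`. -/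
noncomputable def prec (hmech : IsMechanism G mech) (a : ℕ → Fin n) (x : Fin n → V)
    (ρ : V → V) : ℝ≥0∞ := law hmech a x ρ {y | Rec a x y}

lemma ae_adj : ∀ᵐ ω ∂mapsLaw hmech, ∀ i : V × ℕ × V, G.Adj i.1 (ω i) := by
  rw [ae_all_iff]
  intro i
  have : ∀ᵐ ω ∂mapsLaw hmech, ∀ b, ω i = b → G.Adj i.1 b := by
    rw [ae_all_iff]
    intro b
    by_cases h : G.Adj i.1 b
    · exact ae_of_all _ fun _ _ => h
    · have h0 : mech i.1 i.2.2 b = 0 := by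
        by_contra hne
        exact h (hmech.support _ _ _ hne)
      have h1 := mapsLaw_cyl hmech {i} fun _ => b
      simp only [Finset.mem_singleton, forall_eq, Finset.prod_singleton, h0] at h1
      rw [ae_iff]
      simpa [h] using h1
  filter_upwards [this] with ω hω using hω _ rfl

/-- Almost surely every stack contains every neighbour infinitely often: a fixed block of
random maps steering the chain from anywhere to `b` has positive probability, so it occurs
infinitely often by the second Borel-Cantelli lemma. -/
lemma ae_stack_infinite [G.LocallyFinite] {ρ : V → V} (hρ : IsRotor G ρ) :
    ∀ᵐ ω ∂mapsLaw hmech, ∀ v b, G.Adj v b → {k | stack ω ρ v (k + 1) = b}.Infinite := by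
  classical
  rw [ae_all_iff]
  intro v
  rw [ae_all_iff]
  intro b
  by_cases hb : G.Adj v b
  swap
  · exact ae_of_all _ fun _ h => absurd h hb
  obtain ⟨f, L, hf, hL⟩ := exists_route hmech hb
  set B : ℕ → Finset (V × ℕ × V) := fun j =>
    {v} ×ˢ (Finset.Ico (j * (L + 1)) ((j + 1) * (L + 1)) ×ˢ G.neighborFinset v) with hB
  set E : ℕ → Set (V × ℕ × V → V) := fun j => {ω | ∀ i ∈ B j, ω i = f i.2.2} with hE
  have hEm : ∀ j, MeasurableSet (E j) := by
    intro j
    have : E j = ⋂ i ∈ B j, (fun ω : V × ℕ × V → V => ω i) ⁻¹' {f i.2.2} := by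
      ext ω; simp only [hE, Set.mem_ofPred_eq, Set.mem_iInter, Set.mem_preimage,
        Set.mem_singleton_iff]
    rw [this]
    exact Finset.measurableSet_biInter _ fun i _ =>
      measurable_pi_apply _ (MeasurableSet.singleton _)
  have hdisj : ∀ j j', j ≠ j' → Disjoint (B j) (B j') := by
    intro j j' hne
    rw [Finset.disjoint_left]
    rintro ⟨w, k, c⟩ h h'
    simp only [hB, Finset.mem_product, Finset.mem_Ico] at h h'
    have h1 : j < j' + 1 := lt_of_mul_lt_mul_right (h.2.1.1.trans_lt h'.2.1.2) (Nat.zero_le _)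
    have h2 : j' < j + 1 := lt_of_mul_lt_mul_right (h'.2.1.1.trans_lt h.2.1.2) (Nat.zero_le _)
    omega
  have hind : ProbabilityTheory.iIndepSet E (mapsLaw hmech) := by
    rw [ProbabilityTheory.iIndepSet_iff_meas_biInter hEm]
    intro s
    have : ⋂ j ∈ s, E j = {ω | ∀ i ∈ s.biUnion B, ω i = f i.2.2} := by
      ext ω
      simp only [hE, Set.mem_iInter, Set.mem_ofPred_eq, Finset.mem_biUnion]
      exact ⟨fun h i ⟨j, hj, hi⟩ => h j hj i hi, fun h j hj i hi => h i ⟨j, hj, hi⟩⟩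
    rw [this, mapsLaw_cyl hmech _ fun i => f i.2.2,
      Finset.prod_biUnion fun j _ j' _ hne => hdisj j j' hne]
    exact Finset.prod_congr rfl fun j _ => (mapsLaw_cyl hmech _ fun i => f i.2.2).symm
  have hconst : ∀ j, mapsLaw hmech (E j)
      = (∏ c ∈ G.neighborFinset v, mech v c (f c)) ^ (L + 1) := by
    intro j
    rw [hE, mapsLaw_cyl hmech _ fun i => f i.2.2, hB]
    simp only [Finset.prod_product, Finset.prod_singleton, Finset.prod_const, Nat.card_Ico]
    congr 1
    rw [← Nat.sub_mul]
    simp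
  have hne : (∏ c ∈ G.neighborFinset v, mech v c (f c)) ^ (L + 1) ≠ 0 :=
    pow_ne_zero _ (Finset.prod_ne_zero_iff.2 fun c hc => hf c (by simpa using hc))
  have hBC := ProbabilityTheory.measure_limsup_eq_one hEm hind
    (by simp only [hconst]; exact ENNReal.tsum_const_eq_top_of_ne_zero hne)
  have hlim : MeasurableSet (Filter.limsup E Filter.atTop) := .measurableSet_limsup hEm
  have hae : ∀ᵐ ω ∂mapsLaw hmech, ω ∈ Filter.limsup E Filter.atTop :=
    (mem_ae_iff_prob_eq_one hlim).2 hBC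
  filter_upwards [hae, ae_adj hmech] with ω hω hadj _
  rw [Filter.mem_limsup_iff_frequently_mem, Filter.frequently_atTop] at hω
  have hst : ∀ k, G.Adj v (stack ω ρ v k) := by
    intro k
    cases k with
    | zero => exact hρ v
    | succ k => exact hadj (v, k, _)
  refine Set.infinite_of_forall_exists_gt fun N => ?_
  obtain ⟨j, hj, hjE⟩ := hω (N + 2)
  have hrun : ∀ i ≤ L + 1, stack ω ρ v (j * (L + 1) + i)
      = f^[i] (stack ω ρ v (j * (L + 1))) := by
    intro i hi
    induction i with
    | zero => rfl
    | succ i ih =>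
      rw [Function.iterate_succ_apply', ← ih (by omega), ← Nat.add_assoc]
      refine hjE (v, _, _) ?_
      simp only [hB, Finset.mem_product, Finset.mem_singleton, Finset.mem_Ico, true_and,
        SimpleGraph.mem_neighborFinset]
      refine ⟨⟨by omega, ?_⟩, hst _⟩
      rw [Nat.add_mul]
      omega
  obtain ⟨i, hi, e⟩ := hL _ (hst (j * (L + 1)))
  rw [← hrun i (by omega)] at e
  have hjL : j ≤ j * (L + 1) := Nat.le_mul_of_pos_right _ (by omega)
  refine ⟨j * (L + 1) + i - 1, ?_, by omega⟩
  rw [Set.mem_ofPred_eq, Nat.sub_add_cancel (by omega), e]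

/-- The probability of recurrence depends neither on the initial positions nor on the turn
order: the walks driven by the same random maps are recurrent together. -/
lemma prec_eq [G.LocallyFinite] (hn : 0 < n) (hG : G.Connected) {ρ : V → V} (hρ : IsRotor G ρ)
    {a a' : ℕ → Fin n} (ha : Fair a) (ha' : Fair a') (x x' : Fin n → V) :
    prec hmech a x ρ = prec hmech a' x' ρ := by
  unfold prec law
  rw [Measure.map_apply (measurable_traj a x ρ) (measurableSet_rec a x),
    Measure.map_apply (measurable_traj a' x' ρ) (measurableSet_rec a' x')]
  refine measure_congr ?_
  filter_upwards [ae_adj hmech, ae_stack_infinite hmech hρ] with ω h1 h2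
  have hS : ∀ v k, G.Adj v (stack ω ρ v (k + 1)) := fun v k => h1 (v, k, _)
  exact propext ⟨fun h => rec_of_rec G hn hG hS h2 ha (traj_follows a x ρ ω) h ha'
      (traj_follows a' x' ρ ω),
    fun h => rec_of_rec G hn hG hS h2 ha' (traj_follows a' x' ρ ω) h ha
      (traj_follows a x ρ ω)⟩

end Measures

end RWLM

/-! ### The Markov property and the zero-one law for a fixed rotor configuration -/

namespace RWLM

variable {V : Type*} {n : ℕ}

/-- The concatenation of the first `t` entries of `c` with `d`. -/
def glue (t : ℕ) (c d : ℕ → V) : ℕ → V := fun k => if k < t then c k else d (k - t)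

lemma shift_pos_rot (a : ℕ → Fin n) (x : Fin n → V) (ρ : V → V) (y : ℕ → V) (t r : ℕ) :
    pos a x y (t + r) = pos (fun k => a (t + k)) (pos a x y t) (fun k => y (t + k)) r ∧
    rot a x ρ y (t + r)
      = rot (fun k => a (t + k)) (pos a x y t) (rot a x ρ y t) (fun k => y (t + k)) r := by
  induction r with
  | zero => exact ⟨rfl, rfl⟩
  | succ r ih =>
    obtain ⟨h1, h2⟩ := ih
    rw [← Nat.add_assoc]
    constructor
    · simp only [pos, h1]
    · simp only [rot, src, h1, h2]

lemma rec_shift (a : ℕ → Fin n) (x : Fin n → V) (y : ℕ → V) (t : ℕ) :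
    Rec a x y ↔ Rec (fun k => a (t + k)) (pos a x y t) (fun k => y (t + k)) := by
  refine forall_congr' fun v => ?_
  simp only [← Nat.frequently_atTop_iff_infinite, Filter.frequently_atTop,
    ← (shift_pos_rot a x id y t _).1]
  constructor
  · intro h N
    obtain ⟨s, hs, i, hi⟩ := h (t + N)
    exact ⟨s - t, by omega, i, by rwa [Nat.add_sub_cancel' (by omega)]⟩
  · intro h N
    obtain ⟨s, hs, hi⟩ := h N
    exact ⟨t + s, by omega, hi⟩

lemma Fair.shift {a : ℕ → Fin n} (ha : Fair a) (t : ℕ) : Fair fun k => a (t + k) := by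
  intro i N
  obtain ⟨s, hs, e⟩ := ha i (t + N)
  exact ⟨s - t, by omega, by simp only; rwa [Nat.add_sub_cancel' (by omega)]⟩

lemma rot_eq_of_notMem (a : ℕ → Fin n) (x : Fin n → V) (ρ : V → V) (y : ℕ → V) (t : ℕ) :
    ∃ F : Finset V, ∀ v ∉ F, rot a x ρ y t v = ρ v := by
  classical
  induction t with
  | zero => exact ⟨∅, fun _ _ => rfl⟩
  | succ t ih =>
    obtain ⟨F, hF⟩ := ih
    refine ⟨insert (src a x y t) F, fun v hv => ?_⟩
    rw [Finset.mem_insert, not_or] at hv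
    simp only [rot]
    rw [Function.update_of_ne hv.1, hF v hv.2]

lemma IsRotor.update {G : SimpleGraph V} {ρ : V → V} (hρ : IsRotor G ρ) {v b : V} (h : G.Adj v b) [DecidableEq V] :
    IsRotor G (Function.update ρ v b) := by
  intro w
  by_cases e : w = v
  · subst e; simpa using h
  · simpa [e] using hρ w

section Measures

variable [MeasurableSpace V] [DiscreteMeasurableSpace V] [Countable V]
variable {G : SimpleGraph V} {mech : V → V → V → ℝ≥0∞} (hmech : IsMechanism G mech)

lemma measure_ext_cyl [Nonempty V] {μ ν : Measure (ℕ → V)} [IsFiniteMeasure μ]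
    (h : ∀ t c, μ (cyl t c) = ν (cyl t c)) : μ = ν := by
  refine ext_of_generate_finite _ generateFrom_cyl isPiSystem_cyl ?_ ?_
  · rintro _ ⟨t, c, rfl⟩
    exact h t c
  · have := h 0 fun _ => Classical.arbitrary V
    have hu : cyl 0 (fun _ => Classical.arbitrary V) = Set.univ := by
      ext y; simp [cyl]
    rwa [hu] at this

/-- The Markov property, on the event that the first `t` steps are given by `c`. -/
lemma law_restrict_map [Nonempty V] (a : ℕ → Fin n) (x : Fin n → V) (ρ : V → V) (t : ℕ)
    (c : ℕ → V) :
    ((law hmech a x ρ).restrict (cyl t c)).map (fun y k => y (t + k))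
      = law hmech a x ρ (cyl t c) •
          law hmech (fun k => a (t + k)) (pos a x c t) (rot a x ρ c t) := by
  have hmeas : Measurable fun (y : ℕ → V) k => y (t + k) :=
    measurable_pi_iff.2 fun k => measurable_pi_apply _
  refine measure_ext_cyl fun r d => ?_
  rw [Measure.map_apply hmeas (measurableSet_cyl r d),
    Measure.restrict_apply (hmeas (measurableSet_cyl r d)), Measure.smul_apply, smul_eq_mul]
  have hset : (fun (y : ℕ → V) k => y (t + k)) ⁻¹' cyl r d ∩ cyl t c
      = cyl (t + r) (glue t c d) := by
    ext y
    constructor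
    · rintro ⟨h1, h2⟩ s hs
      unfold glue
      split_ifs with h
      · exact h2 s h
      · have := h1 (s - t) (by omega)
        simp only at this
        rwa [Nat.add_sub_cancel' (by omega)] at this
    · intro h
      constructor
      · intro s hs
        have := h (t + s) (by omega)
        simpa [glue] using this
      · intro s hs
        have := h s (by omega)
        simpa [glue, hs] using this
  have hc : ∀ s < t, glue t c d s = c s := fun s hs => by simp [glue, hs]
  have hd : (fun k => glue t c d (t + k)) = d := by
    funext k; simp [glue]
  rw [hset, law_cyl, law_cyl, law_cyl, Finset.prod_range_add]
  congr 1
  · refine Finset.prod_congr rfl fun s hs => ?_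
    rw [Finset.mem_range] at hs
    obtain ⟨h1, -, h3⟩ := pos_odo_rot_congr a x ρ (y := glue t c d) (c := c) (t := s)
      fun r hr => hc r (hr.trans hs)
    simp only [src, h1, h3, hc s hs]
  · refine Finset.prod_congr rfl fun s _ => ?_
    obtain ⟨h1, h2⟩ := shift_pos_rot a x ρ (glue t c d) t s
    obtain ⟨h3, -, h4⟩ := pos_odo_rot_congr a x ρ hc
    rw [hd, h3] at h1
    rw [hd, h3, h4] at h2
    simp only [src, h1, h2]
    simp [glue]

lemma law_rec_inter [Nonempty V] (a : ℕ → Fin n) (x : Fin n → V) (ρ : V → V) (t : ℕ)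
    (c : ℕ → V) :
    law hmech a x ρ ({y | Rec a x y} ∩ cyl t c) = law hmech a x ρ (cyl t c) *
      prec hmech (fun k => a (t + k)) (pos a x c t) (rot a x ρ c t) := by
  have hmeas : Measurable fun (y : ℕ → V) k => y (t + k) :=
    measurable_pi_iff.2 fun k => measurable_pi_apply _
  have hR := measurableSet_rec (fun k => a (t + k)) (pos a x c t)
  have h := congrArg (fun m : Measure (ℕ → V) =>
    m {y | Rec (fun k => a (t + k)) (pos a x c t) y}) (law_restrict_map hmech a x ρ t c)
  simp only [Measure.smul_apply, smul_eq_mul] at h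
  rw [Measure.map_apply hmeas hR, Measure.restrict_apply (hmeas hR)] at h
  rw [prec, ← h]
  congr 1
  ext y
  refine and_congr_left fun hy => ?_
  change Rec a x y ↔ Rec _ _ _
  rw [rec_shift a x y t, (pos_odo_rot_congr a x ρ hy).1]

lemma measurable_prec (a : ℕ → Fin n) (x : Fin n → V) : Measurable (prec hmech a x) := by
  have hrot : ∀ (c : ℕ → V) t v, Measurable fun ρ : V → V => rot a x ρ c t v := by
    classical
    intro c t
    induction t with
    | zero => exact fun v => measurable_pi_apply v
    | succ t ih =>
      intro v
      simp only [rot, Function.update_apply]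
      split_ifs
      · exact measurable_const
      · exact ih v
  have : Measurable (law hmech a x) := by
    refine Measurable.measure_of_isPiSystem_of_isProbabilityMeasure generateFrom_cyl
      isPiSystem_cyl ?_
    rintro _ ⟨t, c, rfl⟩
    simp only [law_cyl]
    refine Finset.measurable_prod _ fun s _ => ?_
    exact (Measurable.of_discrete (f := fun b => mech (src a x c s) b (c s))).comp
      (hrot c s _)
  exact (Measure.measurable_coe (measurableSet_rec a x)).comp this

variable [G.LocallyFinite]

/-- The recurrence probability is harmonic in each rotor: make the first step from `v`. -/
lemma prec_harmonic [DecidableEq V] (hn : 0 < n) (hG : G.Connected) {ρ : V → V}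
    (hρ : IsRotor G ρ)
    {a : ℕ → Fin n} (ha : Fair a) (x : Fin n → V) (v : V) :
    prec hmech a x ρ = ∑' w, mech v (ρ v) w * prec hmech a x (Function.update ρ v w) := by
  have := hG.nonempty
  rw [prec_eq hmech hn hG hρ ha ha x fun _ => v]
  have hpart : {y : ℕ → V | Rec a (fun _ => v) y}
      = ⋃ w, ({y | Rec a (fun _ => v) y} ∩ cyl 1 fun _ => w) := by
    ext y
    simp [cyl]
  have hdisj : Pairwise (Function.onFun Disjoint
      fun w : V => ({y : ℕ → V | Rec a (fun _ => v) y} ∩ cyl 1 fun _ => w)) := by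
    intro w w' hne
    rw [Function.onFun, Set.disjoint_left]
    rintro y ⟨-, h⟩ ⟨-, h'⟩
    exact hne ((h 0 one_pos).symm.trans (h' 0 one_pos))
  rw [prec, hpart, measure_iUnion hdisj fun w =>
    (measurableSet_rec a _).inter (measurableSet_cyl 1 _)]
  refine tsum_congr fun w => ?_
  rw [law_rec_inter, law_cyl]
  simp only [Finset.range_one, Finset.prod_singleton, src, pos, rot]
  by_cases h : mech v (ρ v) w = 0
  · simp [h]
  · congr 1
    have hr := hρ.update (hmech.support _ _ _ h)
    convert prec_eq hmech hn hG hr (ha.shift 1) ha _ x using 1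
    congr!

/-- Changing one rotor does not change the recurrence probability, by the maximum principle
for the irreducible local chain. -/
lemma prec_update [DecidableEq V] (hn : 0 < n) (hG : G.Connected) {ρ : V → V} (hρ : IsRotor G ρ)
    {a : ℕ → Fin n} (ha : Fair a) (x : Fin n → V) {v b : V} (hb : G.Adj v b) :
    prec hmech a x (Function.update ρ v b) = prec hmech a x ρ := by
  set g : V → ℝ≥0∞ := fun b => prec hmech a x (Function.update ρ v b) with hg
  have hharm : ∀ b, G.Adj v b → g b = ∑' w, mech v b w * g w := by
    intro b hb
    have := prec_harmonic hmech hn hG (hρ.update hb) ha x v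
    simpa [hg] using this
  obtain ⟨c, hc, hmax⟩ := Finset.exists_max_image (G.neighborFinset v) g
    ⟨ρ v, by simpa using hρ v⟩
  rw [SimpleGraph.mem_neighborFinset] at hc
  have hfin : ∀ b, g b ≠ ⊤ := fun b => measure_ne_top _ _
  have hprop : ∀ d e, G.Adj v d → g d = g c → mech v d e ≠ 0 → g e = g c := by
    intro d e hd hdc hde
    have hle : ∀ w, mech v d w * g w ≤ mech v d w * g c := by
      intro w
      by_cases h : mech v d w = 0
      · simp [h]
      · exact mul_le_mul_right (hmax w (by simpa using hmech.support _ _ _ h)) _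
    have htot : ∑' w, mech v d w * g c = g c := by
      rw [ENNReal.tsum_mul_right, hmech.total, one_mul]
    by_contra hne
    have hlt : g e < g c :=
      lt_of_le_of_ne (hmax e (by simpa using hmech.support _ _ _ hde)) hne
    have hde' : mech v d e ≠ ⊤ := by
      refine ne_top_of_le_ne_top ENNReal.one_ne_top ?_
      rw [← hmech.total v d]
      exact ENNReal.le_tsum e
    have h := ENNReal.tsum_lt_tsum (i := e) (by rw [← hharm d hd]; exact hfin d) hle
      ((ENNReal.mul_lt_mul_iff_right hde hde').2 hlt)
    rw [htot, ← hharm d hd, hdc] at h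
    exact lt_irrefl _ h
  have hall : ∀ m d e, G.Adj v d → g d = g c → mechPow mech v m d e ≠ 0 → g e = g c := by
    intro m
    induction m with
    | zero =>
      intro d e _ hdc h
      have : d = e := by
        by_contra hne
        exact h (by simp [mechPow, hne])
      rwa [← this]
    | succ m ih =>
      intro d e hd hdc h
      simp only [mechPow, ne_eq, ENNReal.tsum_eq_zero, not_forall, mul_eq_zero, not_or] at h
      obtain ⟨w, hw, hw'⟩ := h
      exact ih w e (hmech.support _ _ _ hw) (hprop d w hd hdc hw) hw'
  have hconst : ∀ e, G.Adj v e → g e = g c := by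
    intro e he
    obtain ⟨m, hm⟩ := hmech.irreducible v c e hc he
    exact hall m c e hc rfl hm.ne'
  have h1 := hconst (ρ v) (hρ v)
  have h2 := hconst b hb
  simp only [hg, Function.update_eq_self] at h1 h2
  rw [h2, h1]

lemma prec_congr_finset (hn : 0 < n) (hG : G.Connected) {a : ℕ → Fin n} (ha : Fair a)
    (x : Fin n → V) {ρ' : V → V} (hρ' : IsRotor G ρ') (F : Finset V) :
    ∀ {ρ : V → V}, IsRotor G ρ → (∀ v ∉ F, ρ v = ρ' v) →
      prec hmech a x ρ = prec hmech a x ρ' := by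
  classical
  induction F using Finset.induction_on with
  | empty =>
    intro ρ _ h
    rw [funext fun v => h v (by simp)]
  | insert v F _ ih =>
    intro ρ hρ h
    rw [← prec_update hmech hn hG hρ ha x (hρ' v)]
    refine ih (hρ.update (hρ' v)) fun w hw => ?_
    by_cases e : w = v
    · subst e; simp
    · rw [Function.update_of_ne e]
      exact h w (by simp [e, hw])

/-- For a fixed rotor configuration, recurrence is independent of every cylinder event, hence
of itself. -/
theorem prec_zero_or_one (hn : 0 < n) (hG : G.Connected) {a : ℕ → Fin n} (ha : Fair a)
    (x : Fin n → V) {ρ : V → V} (hρ : IsRotor G ρ) :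
    prec hmech a x ρ = 0 ∨ prec hmech a x ρ = 1 := by
  classical
  have := hG.nonempty
  have hR := measurableSet_rec a x
  have key : (law hmech a x ρ).restrict {y | Rec a x y}
      = prec hmech a x ρ • law hmech a x ρ := by
    refine measure_ext_cyl fun t c => ?_
    rw [Measure.restrict_apply (measurableSet_cyl t c), Set.inter_comm, law_rec_inter,
      Measure.smul_apply, smul_eq_mul, mul_comm]
    by_cases h : law hmech a x ρ (cyl t c) = 0
    · simp [h]
    congr 1
    have hrot : ∀ s ≤ t, IsRotor G (rot a x ρ c s) := by
      rw [law_cyl, Finset.prod_eq_zero_iff] at h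
      push Not at h
      intro s
      induction s with
      | zero => exact fun _ => hρ
      | succ s ih =>
        intro hs
        have := (ih (by omega)).update
          (hmech.support _ _ _ (h s (Finset.mem_range.2 (by omega))))
        simp only [rot]
        convert this
    obtain ⟨F, hF⟩ := rot_eq_of_notMem a x ρ c t
    rw [prec_eq hmech hn hG (hrot t le_rfl) (ha.shift t) ha _ x]
    exact prec_congr_finset hmech hn hG ha x hρ F (hrot t le_rfl) hF
  have h := congrArg (fun m : Measure (ℕ → V) => m {y | Rec a x y}) key
  simp only [Measure.smul_apply, smul_eq_mul, Measure.restrict_apply hR, Set.inter_self] at h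
  change prec hmech a x ρ = prec hmech a x ρ * prec hmech a x ρ at h
  by_cases h0 : prec hmech a x ρ = 0
  · exact Or.inl h0
  · right
    have hfin : prec hmech a x ρ ≠ ⊤ := measure_ne_top _ _
    exact ((ENNReal.mul_right_inj h0 hfin).1 (by rw [mul_one, ← h])).symm

end Measures

/-! ### The zero-one law over rotor configurations -/

lemma countable_of_connected {G : SimpleGraph V} [G.LocallyFinite] (hG : G.Connected) :
    Countable V := by
  obtain ⟨r⟩ := hG.nonempty
  let A : ℕ → Set V := fun k => Nat.rec {r} (fun _ s => ⋃ w ∈ s, G.neighborSet w) k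
  have hA : ∀ k, (A k).Countable := by
    intro k
    induction k with
    | zero => exact Set.countable_singleton r
    | succ k ih => exact ih.biUnion fun w _ => (Set.toFinite (G.neighborSet w)).countable
  have hT : ∀ v w, G.Walk v w → v ∈ ⋃ k, A k → w ∈ ⋃ k, A k := by
    intro v w p
    induction p with
    | nil => exact id
    | cons h p ih =>
      intro hv
      obtain ⟨k, hk⟩ := Set.mem_iUnion.1 hv
      exact ih (Set.mem_iUnion.2 ⟨k + 1, Set.mem_biUnion hk h⟩)
  rw [← Set.countable_univ_iff]
  refine (Set.countable_iUnion hA).mono fun w _ => ?_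
  obtain ⟨p⟩ := hG.preconnected r w
  exact hT r w p (Set.mem_iUnion.2 ⟨0, rfl⟩)

section IUD

variable [MeasurableSpace V] [Countable V] {G : SimpleGraph V}

lemma ae_isRotor (hGlf : G.LocallyFinite) {ν : Measure (V → V)} (hν : IsIUD G hGlf ν) :
    ∀ᵐ ρ ∂ν, IsRotor G ρ := by
  unfold IsRotor
  rw [ae_all_iff]
  intro v
  have : ∀ᵐ ρ ∂ν, ∀ b, ρ v = b → G.Adj v b := by
    rw [ae_all_iff]
    intro b
    by_cases h : G.Adj v b
    · exact ae_of_all _ fun _ _ => h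
    · have h1 := hν {v} fun _ => b
      rw [ae_iff]
      simpa [h] using h1
  filter_upwards [this] with ρ hρ using hρ _ rfl

variable [DiscreteMeasurableSpace V]

/-- The rotors are independent under the IUD measure. -/
lemma iIndepFun_of_isIUD (hGlf : G.LocallyFinite) (hne : ∀ v, ∃ b, G.Adj v b)
    {ν : Measure (V → V)} [IsProbabilityMeasure ν] (hν : IsIUD G hGlf ν) :
    ProbabilityTheory.iIndepFun (fun v (ρ : V → V) => ρ v) ν := by
  classical
  have hN : ∀ v, (G.neighborFinset v).Nonempty := fun v =>
    (hne v).imp fun b hb => by simpa using hb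
  let m : V → Measure V := fun v => (PMF.uniformOfFinset (G.neighborFinset v) (hN v)).toMeasure
  have hm : ∀ v, IsProbabilityMeasure (m v) := fun v => by
    change IsProbabilityMeasure (PMF.toMeasure _); infer_instance
  have hm1 : ∀ v b, m v {b} = if G.Adj v b then (G.degree v : ℝ≥0∞)⁻¹ else 0 := by
    intro v b
    change (PMF.toMeasure _) {b} = _
    rw [PMF.toMeasure_apply_singleton _ _ (MeasurableSet.singleton _),
      PMF.uniformOfFinset_apply]
    simp
  have hlim : IsProjectiveLimit ν fun F : Finset V => Measure.pi fun i : F => m i := by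
    intro F
    refine Measure.ext_of_singleton fun l => ?_
    rw [Measure.map_apply (Finset.measurable_restrict F) (MeasurableSet.singleton _),
      Measure.pi_singleton]
    have hset : (F.restrict : (V → V) → F → V) ⁻¹' ({l} : Set (F → V)) = {ρ : V → V | ∀ v ∈ F, ρ v =
        (fun v => if h : v ∈ F then l ⟨v, h⟩ else v) v} := by
      ext ρ
      simp only [Set.mem_preimage, Set.mem_singleton_iff, funext_iff, Finset.restrict,
        Subtype.forall, Set.mem_ofPred_eq]
      exact forall₂_congr fun v hv => by simp [hv]
    rw [hset, hν F, ← Finset.prod_coe_sort]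
    refine Finset.prod_congr rfl fun i _ => ?_
    rw [hm1]
    simp
  have : ν = Measure.infinitePi m := hlim.unique (Measure.isProjectiveLimit_infinitePi m)
  rw [this]
  exact ProbabilityTheory.iIndepFun_infinitePi (P := m) (X := fun _ b => b) fun _ => measurable_id

/-- Kolmogorov's zero-one law for events unaffected by changing finitely many rotors. -/
lemma iud_zero_or_one (hGlf : G.LocallyFinite) (hne : ∀ v, ∃ b, G.Adj v b)
    {ν : Measure (V → V)} [IsProbabilityMeasure ν] (hν : IsIUD G hGlf ν) {A : Set (V → V)}
    (hA : MeasurableSet A)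
    (htail : ∀ (F : Finset V) (ρ ρ' : V → V), (∀ v ∉ F, ρ v = ρ' v) → (ρ ∈ A ↔ ρ' ∈ A)) :
    ν A = 0 ∨ ν A = 1 := by
  classical
  refine ProbabilityTheory.measure_zero_or_one_of_measurableSet_limsup
    (s := fun v => MeasurableSpace.comap (fun ρ : V → V => ρ v) inferInstance)
    (p := fun t : Set V => t.Finite) (f := Filter.cofinite) (ns := fun F : Finset V => (F : Set V))
    (fun v => (measurable_pi_apply v).comap_le) (iIndepFun_of_isIUD hGlf hne hν).iIndep
    (fun t ht => by simpa using ht) ?_ (fun F => F.finite_toSet) (fun v => ⟨{v}, by simp⟩) ?_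
  · intro F F'
    exact ⟨F ∪ F', by simp, by simp⟩
  · rw [Filter.limsup_eq_iInf_iSup, MeasurableSpace.measurableSet_iInf]
    intro t
    rw [MeasurableSpace.measurableSet_iInf]
    intro ht
    let d : V → V := id
    let h : (V → V) → V → V := fun ρ v => if v ∈ t then ρ v else d v
    have hpre : A = h ⁻¹' A := by
      ext ρ
      refine htail (Set.Finite.toFinset (Filter.mem_cofinite.1 ht)) ρ (h ρ) fun v hv => ?_
      have : v ∈ t := by simpa using hv
      simp [h, this]
    have hm : @Measurable _ _ (⨆ v ∈ t, MeasurableSpace.comap (fun ρ : V → V => ρ v) inferInstance)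
        MeasurableSpace.pi h := by
      refine @measurable_pi_lambda _ _ _ (_) _ _ fun v => ?_
      by_cases hv : v ∈ t
      · simp only [h, hv, if_true]
        exact (comap_measurable _).mono (le_iSup₂_of_le v hv le_rfl) le_rfl
      · simp only [h, hv, if_false]
        exact measurable_const
    rw [hpre]
    exact hm hA

end IUD

lemma seq_eq (hn : 0 < n) (x : Fin n → V) (ρ : V → V) (y : ℕ → V) (t : ℕ) :
    seq n hn x ρ y t = (pos (active n hn) x y t, rot (active n hn) x ρ y t) := by
  induction t with
  | zero => rfl
  | succ t ih =>
    rw [seq, ih]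
    rfl

lemma fair_active (hn : 0 < n) : Fair (active n hn) := by
  intro i N
  refine ⟨N * n + i, (Nat.le_mul_of_pos_right N hn).trans (Nat.le_add_right _ _), ?_⟩
  ext
  simp [active, Nat.mod_eq_of_lt i.2]

end RWLM

/-- **Proposition (zero-one law for recurrence under the IUD measure).**
Consider the `n`-walker random walk with local memory on `G` with the initial rotor
configuration `ρ` sampled from the IUD measure `ν`.  Then exactly one of the following
holds: `p_rec(ρ) = 0` for `ν`-almost every `ρ`, or `p_rec(ρ) = 1` for `ν`-almost
every `ρ`. -/
theorem rwlm_zero_one_law_iud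
    {V : Type*} [MeasurableSpace V] [DiscreteMeasurableSpace V]
    (G : SimpleGraph V) (hG : G.Connected) (hGlf : G.LocallyFinite)
    (mech : V → V → V → ℝ≥0∞) (hmech : RWLM.IsMechanism G mech)
    (n : ℕ) (hn : 0 < n) (x0 : Fin n → V)
    (ν : MeasureTheory.Measure (V → V)) [MeasureTheory.IsProbabilityMeasure ν]
    (hν : RWLM.IsIUD G hGlf ν)
    (μ : (V → V) → MeasureTheory.Measure (ℕ → V))
    (hprob : ∀ ρ, MeasureTheory.IsProbabilityMeasure (μ ρ))
    (hμ : ∀ ρ, RWLM.IsLaw mech n hn x0 ρ (μ ρ)) :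
    Xor' (∀ᵐ ρ ∂ν, (μ ρ) {y | RWLM.Recurrent n hn x0 ρ y} = 0)
      (∀ᵐ ρ ∂ν, (μ ρ) {y | RWLM.Recurrent n hn x0 ρ y} = 1) := by
  classical
  have hcount : Countable V := RWLM.countable_of_connected hG
  have hnon : Nonempty V := hG.nonempty
  have hne : ∀ v, ∃ b, G.Adj v b := by
    intro v
    by_contra! h
    have h1 := hmech.total v v
    have h2 : ∀ b, mech v v b = 0 := fun b => by
      by_contra h3
      exact h b (hmech.support _ _ _ h3)
    simp [h2] at h1
  choose d hd using hne
  set a := RWLM.active n hn with ha_def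
  have ha : RWLM.Fair a := RWLM.fair_active hn
  have hlaw : ∀ ρ, μ ρ {y | RWLM.Recurrent n hn x0 ρ y} = RWLM.prec hmech a x0 ρ := by
    intro ρ
    have := hprob ρ
    have h1 : μ ρ = RWLM.law hmech a x0 ρ := by
      refine RWLM.measure_ext_cyl fun t c => ?_
      rw [RWLM.law_cyl]
      refine (hμ ρ t c).trans (Finset.prod_congr rfl fun s _ => ?_)
      rw [RWLM.seq_eq]
      rfl
    rw [h1, RWLM.prec]
    congr 1
    ext y
    simp only [Set.mem_ofPred_eq, RWLM.Recurrent, RWLM.Rec, RWLM.seq_eq, ← ha_def]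
  simp only [hlaw]
  -- `fix` turns an arbitrary map into a rotor configuration and preserves genuine ones, so
  -- that invariance under finite changes holds for all maps and not only almost surely.
  let fix : (V → V) → V → V := fun ρ v => if G.Adj v (ρ v) then ρ v else d v
  have hfix : ∀ ρ, RWLM.IsRotor G (fix ρ) := by
    intro ρ v
    by_cases h : G.Adj v (ρ v)
    · simp [fix, h]
    · simp [fix, h, hd v]
  have hfix_eq : ∀ ρ, RWLM.IsRotor G ρ → fix ρ = ρ := by
    intro ρ hρ
    funext v
    simp [fix, hρ v]
  have hfix_meas : Measurable fix := by
    refine measurable_pi_lambda _ fun v => ?_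
    exact (Measurable.of_discrete (f := fun b => if G.Adj v b then b else d v)).comp
      (measurable_pi_apply v)
  set A : Set (V → V) := {ρ | RWLM.prec hmech a x0 (fix ρ) = 1} with hA_def
  have hA : MeasurableSet A :=
    ((RWLM.measurable_prec hmech a x0).comp hfix_meas) (MeasurableSet.singleton 1)
  have htail : ∀ (F : Finset V) (ρ ρ' : V → V), (∀ v ∉ F, ρ v = ρ' v) →
      (ρ ∈ A ↔ ρ' ∈ A) := by
    intro F ρ ρ' h
    have : RWLM.prec hmech a x0 (fix ρ) = RWLM.prec hmech a x0 (fix ρ') :=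
      RWLM.prec_congr_finset hmech hn hG ha x0 (hfix ρ') F (hfix ρ)
        fun v hv => by simp only [fix, h v hv]
    simp only [hA_def, Set.mem_ofPred_eq, this]
  have hrot := RWLM.ae_isRotor hGlf hν
  have hexcl : ¬ ((∀ᵐ ρ ∂ν, RWLM.prec hmech a x0 ρ = 0) ∧
      ∀ᵐ ρ ∂ν, RWLM.prec hmech a x0 ρ = 1) := by
    rintro ⟨h0, h1⟩
    obtain ⟨ρ, e0, e1⟩ := (h0.and h1).exists
    exact zero_ne_one (e0.symm.trans e1)
  rcases RWLM.iud_zero_or_one hGlf (fun v => ⟨d v, hd v⟩) hν hA htail with h | h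
  · have h0 : ∀ᵐ ρ ∂ν, RWLM.prec hmech a x0 ρ = 0 := by
      have h' : ∀ᵐ ρ ∂ν, ρ ∉ A := measure_eq_zero_iff_ae_notMem.1 h
      filter_upwards [h', hrot] with ρ hρA hρ
      refine (RWLM.prec_zero_or_one hmech hn hG ha x0 hρ).resolve_right fun h1 => hρA ?_
      rw [hA_def, Set.mem_ofPred_eq, hfix_eq ρ hρ, h1]
    exact Or.inl ⟨h0, fun h1 => hexcl ⟨h0, h1⟩⟩
  · have h1 : ∀ᵐ ρ ∂ν, RWLM.prec hmech a x0 ρ = 1 := by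
      have h' : ∀ᵐ ρ ∂ν, ρ ∈ A := (mem_ae_iff_prob_eq_one hA).2 h
      filter_upwards [h', hrot] with ρ hρA hρ
      rw [hA_def, Set.mem_ofPred_eq, hfix_eq ρ hρ] at hρA
      exact hρA
    exact Or.inr ⟨h1, fun h0 => hexcl ⟨h0, h1⟩⟩
end

section
/- Let q ∈ (0,1] and n ≥ 1. Then for the n-walker H–V walk with any initial label configuration ρ, the recurrence probability equals the iterated limit of the return probabilities of the frozen walks: p_rec(ρ) = lim_{k→∞} lim_{r→∞} p_{k,r}(ρ). -/
/-!
All the frozen walks and the unfrozen walk are realized on one probability space by attaching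
to every vertex a stack of independent instructions (flip or keep the label, sign of the step);
a walker leaving `x` uses the next unused entry of the stack of `x`. By `law_aux` and
`law_unique` the trajectory of the stack-driven walk has the prescribed law for every radius
(`frozenLaw_eq`). Radius `0` freezes nothing, so the unfrozen walk is the case `r = 0`.

Let `R_r` be the total number of returns to the origin of the walk frozen on `∂B_r` and `R` that
of the unfrozen walk, driven by the same stacks. Returns are arrivals at the origin, hence a
monotone function of the odometer (the departure counts), by `returns_eq` and `arr_mono`.

* By the least action principle `odo_le` the odometer of the frozen walk is dominated by that of
  the unfrozen one. The order in which the walkers move is irrelevant: if the frozen walk is the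
  first to exceed the unfrozen odometer at some `x`, conservation of walkers (`balance`) leaves
  an unfrozen walker at `x`, and that walker departs at its next turn. So `R_r ≤ R`.
* Up to time `t ≤ r` the two walks coincide (`walk_local`).

Therefore `P[R_r ≥ k] → P[R ≥ k]` as `r → ∞` (`tendsto_radius`), and continuity from above gives
`P[R ≥ k] → P[R = ∞]` as `k → ∞` (`tendsto_level`).

It remains that `R = ∞` is almost surely the recurrence event (`recurrent_iff`). Since `q > 0`,
the second Borel-Cantelli lemma provides, at every vertex and for every sign, infinitely many
pairs of consecutive flips carrying that sign; during such a pair the label takes both values,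
so each vertex issues each of its four instructions infinitely often (`good_ae`). Infinitely many
departures from a vertex then force infinitely many departures from each neighbour.
-/

open MeasureTheory Filter
open scoped ENNReal

namespace HV

abbrev Z2 := ℤ × ℤ

/-- A label configuration: `true` stands for label `H`, `false` for label `V`. -/
abbrev Config := Z2 → Bool

/-- The state of the walk: positions of the `n` walkers and the label configuration. -/
abbrev State (n : ℕ) := (Fin n → Z2) × Config

/-- A trajectory: the sequence of positions of the active walker after each step. -/
abbrev Path := ℕ → Z2

/-- The walker that is active at the `(t+1)`-st step of the cyclic turn order. -/
def active (n : ℕ) (hn : 0 < n) (t : ℕ) : Fin n := ⟨t % n, Nat.mod_lt t hn⟩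

/-- Update the state when walker `i` moves to `y`: the label of the vertex the walker
leaves becomes `H` (`true`) if the move was horizontal, `V` (`false`) if vertical. -/
def apply' (n : ℕ) (s : State n) (i : Fin n) (y : Z2) : State n :=
  (Function.update s.1 i y,
    Function.update s.2 (s.1 i) (if y.2 = (s.1 i).2 then true else false))

/-- The one-step transition probability of the `H`–`V` walk with parameter `q`:
probability that, from state `s`, the active walker `i` moves to `y`.  The label of the
current location is first resampled (flipped with probability `q`), and then the walker
takes a uniform horizontal step if the new label is `H`, a uniform vertical step if the
new label is `V`. -/
noncomputable def weight (q : ℝ) (n : ℕ) (s : State n) (i : Fin n) (y : Z2) : ℝ≥0∞ :=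
  if y = s.1 i + (1, 0) ∨ y = s.1 i - (1, 0) then
    ENNReal.ofReal ((if s.2 (s.1 i) then 1 - q else q) / 2)
  else if y = s.1 i + (0, 1) ∨ y = s.1 i - (0, 1) then
    ENNReal.ofReal ((if s.2 (s.1 i) then q else 1 - q) / 2)
  else 0

/-- The deterministic reconstruction of the state of the `n`-walker `H`–`V` walk
(with all walkers starting at the origin and initial labels `ρ`) from a trajectory. -/
def seq (n : ℕ) (hn : 0 < n) (ρ : Config) (y : Path) : ℕ → State n
  | 0 => (fun _ => (0, 0), ρ)
  | t + 1 => apply' n (seq n hn ρ y t) (active n hn t) (y t)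

/-- `μ` is the law of the `n`-walker `H`–`V` walk with parameter `q` and initial labels `ρ`:
the finite-dimensional distributions are products of one-step transition probabilities. -/
def IsLaw (q : ℝ) (n : ℕ) (hn : 0 < n) (ρ : Config) (μ : Measure Path) : Prop :=
  ∀ (t : ℕ) (c : Path),
    μ {y : Path | ∀ s < t, y s = c s} =
      ∏ s ∈ Finset.range t, weight q n (seq n hn ρ c s) (active n hn s) (c s)

/-- A trajectory is recurrent if every vertex is visited infinitely many times. -/
def Recurrent (n : ℕ) (hn : 0 < n) (ρ : Config) (y : Path) : Prop :=
  ∀ v : Z2, {t : ℕ | ∃ i, (seq n hn ρ y t).1 i = v}.Infinite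

end HV

namespace HV

/-- The Euclidean norm of a lattice point. -/
noncomputable def norm2 (x : Z2) : ℝ := Real.sqrt ((x.1 : ℝ) ^ 2 + (x.2 : ℝ) ^ 2)

/-- The open Euclidean ball `B_r` of radius `r` around the origin in `ℤ²`. -/
def ball (r : ℝ) : Set Z2 := {x | norm2 x < r}

/-- `x` and `y` are nearest neighbors in `ℤ²`. -/
def adj (x y : Z2) : Prop := |x.1 - y.1| + |x.2 - y.2| = 1

/-- The outer boundary `∂B_r` of the ball `B_r`. -/
def bdry (r : ℝ) : Set Z2 := {x | x ∉ ball r ∧ ∃ y, adj x y ∧ y ∈ ball r}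

open Classical in
/-- Update of the state of the frozen walk: a walker located on `∂B_r` is frozen and
skips its turn. -/
noncomputable def fapply (n : ℕ) (r : ℝ) (s : State n) (i : Fin n) (y : Z2) : State n :=
  if s.1 i ∈ bdry r then s else apply' n s i y

open Classical in
/-- The one-step transition probability of the frozen `H`–`V` walk: a walker located on
`∂B_r` stays put with probability one. -/
noncomputable def fweight (q : ℝ) (n : ℕ) (r : ℝ) (s : State n) (i : Fin n) (y : Z2) :
    ℝ≥0∞ :=
  if s.1 i ∈ bdry r then (if y = s.1 i then 1 else 0) else weight q n s i y

/-- The deterministic reconstruction of the state of the frozen `n`-walker `H`–`V` walk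
in `B_r` (with all walkers starting at the origin and initial labels `ρ`) from a
trajectory. -/
noncomputable def fseq (n : ℕ) (hn : 0 < n) (r : ℝ) (ρ : Config) (y : Path) :
    ℕ → State n
  | 0 => (fun _ => (0, 0), ρ)
  | t + 1 => fapply n r (fseq n hn r ρ y t) (active n hn t) (y t)

/-- `μ` is the law of the frozen `n`-walker `H`–`V` walk in `B_r` with parameter `q` and
initial labels `ρ`. -/
def IsFrozenLaw (q : ℝ) (n : ℕ) (hn : 0 < n) (r : ℝ) (ρ : Config) (μ : Measure Path) :
    Prop :=
  ∀ (t : ℕ) (c : Path),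
    μ {y : Path | ∀ s < t, y s = c s} =
      ∏ s ∈ Finset.range t, fweight q n r (fseq n hn r ρ c s) (active n hn s) (c s)

open Classical in
/-- `R_{t,r}`: the number of returns to the origin up to time `t` of a walk with state
sequence `S`. -/
noncomputable def returns (n : ℕ) (S : ℕ → State n) (t : ℕ) : ℕ :=
  ((Finset.Icc 1 t).filter fun s =>
    ∃ i, (S (s - 1)).1 i ≠ (0, 0) ∧ (S s).1 i = (0, 0)).card

open Classical in
/-- `N_t`: the number of departures from the origin up to time `t` of a walk with state
sequence `S`. -/
noncomputable def departures (n : ℕ) (S : ℕ → State n) (t : ℕ) : ℕ :=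
  ((Finset.Icc 1 t).filter fun s =>
    ∃ i, (S (s - 1)).1 i = (0, 0) ∧ (S s).1 i ≠ (0, 0)).card

/-- The return probability `p_{k,r}(ρ) = lim_{t→∞} P[R_{t,r} ≥ k]` of the frozen walk
with law `μr`. -/
noncomputable def returnProb (n : ℕ) (hn : 0 < n) (r : ℝ) (ρ : Config)
    (μr : Measure Path) (k : ℕ) : ℝ :=
  limUnder atTop fun t =>
    (μr {y : Path | k ≤ returns n (fun u => fseq n hn r ρ y u) t}).toReal

open Classical in
/-- The stopping time `τ_{k,r}(ρ)`: the first time at which the frozen walk has either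
returned to the origin `k` times or all walkers are frozen at `∂B_r`. -/
noncomputable def tau (n : ℕ) (hn : 0 < n) (r : ℝ) (ρ : Config) (k : ℕ) (y : Path) :
    ℕ :=
  sInf {t : ℕ | returns n (fun u => fseq n hn r ρ y u) t = k ∨
    ∀ i, (fseq n hn r ρ y t).1 i ∈ bdry r}

end HV

namespace HV

/-! ### Stacks of instructions and the walk they drive -/

/-- A stack environment: the entry at `(x, k)` is used at the `(k+1)`-st departure from `x`.
Its first bit says whether the label of `x` is flipped, its second bit is the sign of the
step along the axis chosen by the new label. -/
abbrev Stack := Z2 × ℕ → Bool × Bool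

/-- The label of `x` after `k` departures from `x`. -/
def lab (ρ : Config) (ω : Stack) (x : Z2) : ℕ → Bool
  | 0 => ρ x
  | k + 1 => xor (lab ρ ω x k) (ω (x, k)).1

/-- The unit step along the axis of the label `h` (`true` is horizontal), with sign `s`. -/
def dirOf (h s : Bool) : Z2 :=
  if h then (if s then (1, 0) else (-1, 0)) else (if s then (0, 1) else (0, -1))

/-- The step taken at the `(k+1)`-st departure from `x`. -/
def instr (ρ : Config) (ω : Stack) (x : Z2) (k : ℕ) : Z2 :=
  dirOf (lab ρ ω x (k + 1)) (ω (x, k)).2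

/-- The four unit steps. -/
def dirs : Finset Z2 := {(1, 0), (-1, 0), (0, 1), (0, -1)}

lemma dirOf_mem (h s : Bool) : dirOf h s ∈ dirs := by
  cases h <;> cases s <;> decide

lemma dirOf_ne_zero (h s : Bool) : dirOf h s ≠ 0 := by
  cases h <;> cases s <;> decide

open Classical in
/-- The walk frozen on `∂B_r`, driven by the stacks `ω`: the positions of the walkers
together with the odometer, which counts the departures from each vertex. For `r = 0` no
vertex freezes and this is the ordinary walk. -/
noncomputable def walk (n : ℕ) (hn : 0 < n) (r : ℝ) (ρ : Config) (ω : Stack) :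
    ℕ → (Fin n → Z2) × (Z2 → ℕ)
  | 0 => (fun _ => (0, 0), fun _ => 0)
  | t + 1 =>
    let s := walk n hn r ρ ω t
    let i := active n hn t
    if s.1 i ∈ bdry r then s else
      (Function.update s.1 i (s.1 i + instr ρ ω (s.1 i) (s.2 (s.1 i))),
        Function.update s.2 (s.1 i) (s.2 (s.1 i) + 1))

/-- The trajectory of the stack-driven walk: the position of the active walker after each
turn. -/
noncomputable def out (n : ℕ) (hn : 0 < n) (r : ℝ) (ρ : Config) (ω : Stack) : Path :=
  fun t => (walk n hn r ρ ω (t + 1)).1 (active n hn t)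

lemma bdry_zero (x : Z2) : x ∉ bdry 0 := by
  rintro ⟨-, y, -, hy⟩
  exact absurd hy (not_lt.2 (Real.sqrt_nonneg _))

section walk
variable (n : ℕ) (hn : 0 < n) (r : ℝ) (ρ : Config) (ω : Stack)

lemma walk_frozen (t : ℕ)
    (h : (walk n hn r ρ ω t).1 (active n hn t) ∈ bdry r) :
    walk n hn r ρ ω (t + 1) = walk n hn r ρ ω t := by
  rw [walk]; simp [h]

lemma walk_move (t : ℕ) (x : Z2) (hx : (walk n hn r ρ ω t).1 (active n hn t) = x)
    (h : x ∉ bdry r) :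
    walk n hn r ρ ω (t + 1) =
      (Function.update (walk n hn r ρ ω t).1 (active n hn t)
          (x + instr ρ ω x ((walk n hn r ρ ω t).2 x)),
        Function.update (walk n hn r ρ ω t).2 x ((walk n hn r ρ ω t).2 x + 1)) := by
  subst hx
  rw [walk]; simp [h]

lemma fseq_zero (y : Path) (t : ℕ) : fseq n hn 0 ρ y t = seq n hn ρ y t := by
  induction t with
  | zero => rfl
  | succ t ih => rw [fseq, seq, fapply, if_neg (bdry_zero _), ih]

lemma odo_mono_succ (t : ℕ) (x : Z2) :
    (walk n hn r ρ ω t).2 x ≤ (walk n hn r ρ ω (t + 1)).2 x := by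
  by_cases h : (walk n hn r ρ ω t).1 (active n hn t) ∈ bdry r
  · rw [walk_frozen n hn r ρ ω t h]
  · rw [walk_move n hn r ρ ω t _ rfl h]
    by_cases hx : x = (walk n hn r ρ ω t).1 (active n hn t)
    · subst hx; simp
    · simp [Function.update_of_ne hx]

lemma odo_mono (x : Z2) : Monotone fun t => (walk n hn r ρ ω t).2 x :=
  monotone_nat_of_le_succ fun t => odo_mono_succ n hn r ρ ω t x

/-- The number of arrivals at `z` produced by an odometer `u`. -/
def arr (u : Z2 → ℕ) (z : Z2) : ℕ :=
  ∑ e ∈ dirs, Nat.count (fun k => instr ρ ω (z - e) k = e) (u (z - e))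

lemma arr_mono {u v : Z2 → ℕ} (h : ∀ x, u x ≤ v x) (z : Z2) :
    arr ρ ω u z ≤ arr ρ ω v z :=
  Finset.sum_le_sum fun _ _ => Nat.count_monotone _ (h _)

lemma arr_update (u : Z2 → ℕ) (x z : Z2) :
    arr ρ ω (Function.update u x (u x + 1)) z =
      arr ρ ω u z + if x + instr ρ ω x (u x) = z then 1 else 0 := by
  have h : ∀ e ∈ dirs, Nat.count (fun k => instr ρ ω (z - e) k = e)
      (Function.update u x (u x + 1) (z - e)) =
      Nat.count (fun k => instr ρ ω (z - e) k = e) (u (z - e)) +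
        if instr ρ ω x (u x) = e then (if x + instr ρ ω x (u x) = z then 1 else 0) else 0 := by
    intro e _
    by_cases hx : z - e = x
    · rw [hx, Function.update_self, Nat.count_succ]
      by_cases he : instr ρ ω x (u x) = e
      · have : x + e = z := by rw [← hx]; abel
        simp [he, this]
      · simp [he]
    · rw [Function.update_of_ne hx]
      by_cases he : instr ρ ω x (u x) = e
      · have : x + e ≠ z := fun h => hx (by rw [← h]; abel)
        simp [he, this]
      · simp [he]
  rw [arr, Finset.sum_congr rfl h, Finset.sum_add_distrib, Finset.sum_ite_eq,
    if_pos (show instr ρ ω x (u x) ∈ dirs from dirOf_mem _ _), arr]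

/-- The number of walkers at `z` when the positions are `p`. -/
def occ {n : ℕ} (p : Fin n → Z2) (z : Z2) : ℕ := ∑ j, if p j = z then 1 else 0

lemma occ_le {n : ℕ} (p : Fin n → Z2) (z : Z2) : occ p z ≤ n := by
  calc occ p z ≤ ∑ _j : Fin n, 1 := Finset.sum_le_sum fun j _ => by split_ifs <;> simp
    _ = n := by simp

lemma occ_pos {n : ℕ} {p : Fin n → Z2} {z : Z2} : 0 < occ p z ↔ ∃ j, p j = z := by
  rw [occ, Finset.sum_pos_iff]
  simp only [Finset.mem_univ, true_and]
  refine exists_congr fun j => ?_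
  split_ifs with h <;> simp [h]

lemma occ_update {n : ℕ} (p : Fin n → Z2) (i : Fin n) (y z : Z2) :
    occ (Function.update p i y) z + (if p i = z then 1 else 0) =
      occ p z + if y = z then 1 else 0 := by
  rw [occ, occ, ← Finset.add_sum_erase _ _ (Finset.mem_univ i),
    ← Finset.add_sum_erase _ (fun j => if p j = z then 1 else 0) (Finset.mem_univ i)]
  have : ∑ j ∈ Finset.univ.erase i, (if Function.update p i y j = z then 1 else 0) =
      ∑ j ∈ Finset.univ.erase i, if p j = z then 1 else 0 :=
    Finset.sum_congr rfl fun j hj => by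
      rw [Function.update_of_ne (Finset.ne_of_mem_erase hj)]
  rw [this]
  simp only [Function.update_self]
  ring

/-- Conservation of walkers: at every vertex, walkers present plus departures equal initial
walkers plus arrivals. -/
lemma balance (t : ℕ) (z : Z2) :
    occ (walk n hn r ρ ω t).1 z + (walk n hn r ρ ω t).2 z =
      (if z = 0 then n else 0) + arr ρ ω (walk n hn r ρ ω t).2 z := by
  induction t with
  | zero =>
    have h : ((0 : ℤ), (0 : ℤ)) = z ↔ z = 0 := eq_comm
    simp only [walk, occ, arr, h]
    split_ifs <;> simp
  | succ t ih =>
    by_cases h : (walk n hn r ρ ω t).1 (active n hn t) ∈ bdry r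
    · rw [walk_frozen n hn r ρ ω t h, ih]
    · rw [walk_move n hn r ρ ω t _ rfl h]
      generalize hx : (walk n hn r ρ ω t).1 (active n hn t) = x
      have h1 := occ_update (walk n hn r ρ ω t).1 (active n hn t)
        (x + instr ρ ω x ((walk n hn r ρ ω t).2 x)) z
      rw [hx] at h1
      rw [arr_update]
      dsimp only
      by_cases hz : z = x
      · subst hz
        rw [if_pos rfl] at h1
        rw [Function.update_self]
        omega
      · rw [if_neg (Ne.symm hz)] at h1
        rw [Function.update_of_ne hz]
        omega

/-! ### Abelian property -/

/-- In the unfrozen walk a walker standing at `x` leaves `x` at its next turn. -/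
lemma depart_aux (j : Fin n) (x : Z2) (d : ℕ) : ∀ t, active n hn (t + d) = j →
    (walk n hn 0 ρ ω t).1 j = x →
    ∃ t', (walk n hn 0 ρ ω t).2 x + 1 ≤ (walk n hn 0 ρ ω t').2 x := by
  induction d with
  | zero =>
    intro t hj hx
    refine ⟨t + 1, ?_⟩
    rw [add_zero] at hj
    rw [walk_move n hn 0 ρ ω t x (by rw [hj, hx]) (bdry_zero x)]
    simp
  | succ d ih =>
    intro t hj hx
    by_cases h : active n hn t = j
    · refine ⟨t + 1, ?_⟩
      rw [walk_move n hn 0 ρ ω t x (by rw [h, hx]) (bdry_zero x)]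
      simp
    · obtain ⟨t', ht'⟩ := ih (t + 1) (by rw [← hj]; congr 1; ring) (by
        rw [walk_move n hn 0 ρ ω t _ rfl (bdry_zero _)]
        simpa [Function.update_of_ne (Ne.symm h)] using hx)
      exact ⟨t', le_trans (Nat.add_le_add_right (odo_mono_succ n hn 0 ρ ω t x) 1) ht'⟩

lemma depart (t : ℕ) (j : Fin n) (x : Z2) (hx : (walk n hn 0 ρ ω t).1 j = x) :
    ∃ t', (walk n hn 0 ρ ω t).2 x + 1 ≤ (walk n hn 0 ρ ω t').2 x := by
  refine depart_aux n hn ρ ω j x (j + n * t - t) t ?_ hx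
  have h : t ≤ n * t := Nat.le_mul_of_pos_left t hn
  have : t + (j + n * t - t) = j + n * t := by omega
  rw [this]
  ext
  simp [active, Nat.mod_eq_of_lt j.2]

/-- Least action principle: the odometer of the frozen walk is dominated by that of the
unfrozen walk driven by the same stacks. If the frozen walk is about to exceed the unfrozen
odometer at `x`, then conservation of walkers leaves some walker of the unfrozen walk at `x`,
and that walker eventually departs. -/
lemma odo_le (T : ℕ) : ∃ t, ∀ x, (walk n hn r ρ ω T).2 x ≤ (walk n hn 0 ρ ω t).2 x := by
  induction T with
  | zero => exact ⟨0, fun x => le_rfl⟩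
  | succ T ih =>
    obtain ⟨t, ht⟩ := ih
    by_cases h : (walk n hn r ρ ω T).1 (active n hn T) ∈ bdry r
    · exact ⟨t, by rwa [walk_frozen n hn r ρ ω T h]⟩
    generalize hx : (walk n hn r ρ ω T).1 (active n hn T) = x at h
    rw [walk_move n hn r ρ ω T x hx h]
    suffices H : ∃ t', t ≤ t' ∧
        (walk n hn r ρ ω T).2 x + 1 ≤ (walk n hn 0 ρ ω t').2 x by
      obtain ⟨t', htt, ht'⟩ := H
      refine ⟨t', fun z => ?_⟩
      by_cases hz : z = x
      · subst hz; simpa using ht'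
      · simp only [Function.update_of_ne hz]
        exact (ht z).trans (odo_mono n hn 0 ρ ω z htt)
    by_cases hlt : (walk n hn r ρ ω T).2 x < (walk n hn 0 ρ ω t).2 x
    · exact ⟨t, le_rfl, hlt⟩
    have heq := le_antisymm (ht x) (not_lt.1 hlt)
    have h1 := balance n hn r ρ ω T x
    have h2 := balance n hn 0 ρ ω t x
    have h3 := arr_mono ρ ω ht x
    have h4 : 0 < occ (walk n hn r ρ ω T).1 x := occ_pos.2 ⟨_, hx⟩
    obtain ⟨j, hj⟩ := occ_pos.1 (show 0 < occ (walk n hn 0 ρ ω t).1 x by omega)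
    obtain ⟨t', ht'⟩ := depart n hn ρ ω t j x hj
    refine ⟨max t t', le_max_left _ _, ?_⟩
    have := odo_mono n hn 0 ρ ω x (le_max_right t t')
    simp only at this
    omega

/-- After `t` turns every walker is within `ℓ¹`-distance `t` of the origin. Hence all turns
before time `t` start inside `B_t`, and a boundary of radius `r ≥ t` has not been felt. -/
lemma walk_local (r t : ℕ) (h : t ≤ r) :
    walk n hn (r : ℝ) ρ ω t = walk n hn 0 ρ ω t ∧
      ∀ i, |((walk n hn 0 ρ ω t).1 i).1| + |((walk n hn 0 ρ ω t).1 i).2| ≤ (t : ℤ) := by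
  induction t with
  | zero => exact ⟨rfl, fun i => by simp [walk]⟩
  | succ t ih =>
    obtain ⟨h1, h2⟩ := ih (by omega)
    generalize hx : (walk n hn 0 ρ ω t).1 (active n hn t) = x
    have hb : x ∉ bdry (r : ℝ) := by
      rintro ⟨hx', -⟩
      apply hx'
      have h3 := h2 (active n hn t)
      rw [hx] at h3
      have h4 : |(x.1 : ℝ)| + |(x.2 : ℝ)| ≤ t := by exact_mod_cast h3
      have h5 : ((t + 1 : ℕ) : ℝ) ≤ r := by exact_mod_cast h
      push_cast at h5
      change Real.sqrt _ < _
      have h6 : Real.sqrt ((x.1 : ℝ) ^ 2 + (x.2 : ℝ) ^ 2) ≤ |(x.1 : ℝ)| + |(x.2 : ℝ)| := by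
        apply Real.sqrt_le_iff.2
        refine ⟨by positivity, ?_⟩
        nlinarith [sq_abs (x.1 : ℝ), sq_abs (x.2 : ℝ), abs_nonneg (x.1 : ℝ),
          abs_nonneg (x.2 : ℝ), mul_nonneg (abs_nonneg (x.1 : ℝ)) (abs_nonneg (x.2 : ℝ))]
      linarith
    rw [walk_move n hn r ρ ω t x (by rw [h1, hx]) hb,
      walk_move n hn 0 ρ ω t x hx (bdry_zero x), h1]
    refine ⟨rfl, fun i => ?_⟩
    by_cases hi : i = active n hn t
    · subst hi
      have h3 := h2 (active n hn t)
      rw [hx] at h3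
      have h4 : ∀ e ∈ dirs, |e.1| + |e.2| = 1 := by decide
      have h5 := h4 _ (dirOf_mem (lab ρ ω x ((walk n hn 0 ρ ω t).2 x + 1))
        (ω (x, (walk n hn 0 ρ ω t).2 x)).2)
      simp only [Function.update_self, instr, Prod.fst_add, Prod.snd_add]
      push_cast
      have := abs_add_le x.1 (dirOf (lab ρ ω x ((walk n hn 0 ρ ω t).2 x + 1))
        (ω (x, (walk n hn 0 ρ ω t).2 x)).2).1
      have := abs_add_le x.2 (dirOf (lab ρ ω x ((walk n hn 0 ρ ω t).2 x + 1))
        (ω (x, (walk n hn 0 ρ ω t).2 x)).2).2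
      linarith
    · simp only [Function.update_of_ne hi]
      have := h2 i
      push_cast
      linarith

/-! ### Returns to the origin -/

/-- Returns to the origin are exactly the arrivals at the origin. -/
lemma returns_eq (S : ℕ → State n) (hS : ∀ t, (S t).1 = (walk n hn r ρ ω t).1) (t : ℕ) :
    returns n S t = arr ρ ω (walk n hn r ρ ω t).2 0 := by
  classical
  induction t with
  | zero => simp [returns, arr, walk]
  | succ t ih =>
    have hstep : returns n S (t + 1) = returns n S t +
        if ∃ i, (walk n hn r ρ ω t).1 i ≠ (0, 0) ∧ (walk n hn r ρ ω (t + 1)).1 i = (0, 0)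
          then 1 else 0 := by
      unfold returns
      rw [← Finset.insert_Icc_right_eq_Icc_add_one (by omega), Finset.filter_insert]
      simp only [Nat.add_sub_cancel, hS]
      split_ifs with h
      · rw [Finset.card_insert_of_notMem (by simp)]
      · rfl
    rw [hstep, ih]
    by_cases h : (walk n hn r ρ ω t).1 (active n hn t) ∈ bdry r
    · rw [walk_frozen n hn r ρ ω t h]
      rw [if_neg, add_zero]
      rintro ⟨i, h1, h2⟩
      exact h1 h2
    · generalize hx : (walk n hn r ρ ω t).1 (active n hn t) = x at h
      rw [walk_move n hn r ρ ω t x hx h, arr_update]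
      congr 1
      refine if_congr ⟨?_, fun h0 => ⟨active n hn t, ?_, ?_⟩⟩ rfl rfl
      · rintro ⟨i, h1, h2⟩
        by_cases hi : i = active n hn t
        · subst hi
          simp only [Function.update_self] at h2
          exact h2
        · simp only [Function.update_of_ne hi] at h2
          exact absurd h2 h1
      · rintro h1
        rw [hx] at h1
        change x = 0 at h1
        rw [h1, zero_add] at h0
        exact dirOf_ne_zero _ _ h0
      · simp only [Function.update_self]
        exact h0

/-! ### Recurrence along good stacks -/

/-- Every vertex issues every one of the four instructions infinitely often. -/
def Good : Prop := ∀ x : Z2, ∀ e ∈ dirs, ∀ m : ℕ, ∃ k ≥ m, instr ρ ω x k = e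

lemma count_unbounded {p : ℕ → Prop} [DecidablePred p] (h : ∀ m, ∃ k ≥ m, p k) (M : ℕ) :
    ∃ N, M ≤ Nat.count p N := by
  induction M with
  | zero => exact ⟨0, Nat.zero_le _⟩
  | succ M ih =>
    obtain ⟨N, hN⟩ := ih
    obtain ⟨k, hk, hp⟩ := h N
    refine ⟨k + 1, ?_⟩
    rw [Nat.count_succ, if_pos hp]
    have := Nat.count_monotone p hk
    omega

lemma unbounded_step (hg : Good ρ ω) (x e : Z2) (he : e ∈ dirs)
    (hx : ∀ m, ∃ t, m ≤ (walk n hn 0 ρ ω t).2 x) (m : ℕ) :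
    ∃ t, m ≤ (walk n hn 0 ρ ω t).2 (x + e) := by
  obtain ⟨N, hN⟩ := count_unbounded (hg x e he) (m + n)
  obtain ⟨t, ht⟩ := hx N
  refine ⟨t, ?_⟩
  have h1 := balance n hn 0 ρ ω t (x + e)
  have h2 : Nat.count (fun k => instr ρ ω (x + e - e) k = e)
      ((walk n hn 0 ρ ω t).2 (x + e - e)) ≤ arr ρ ω (walk n hn 0 ρ ω t).2 (x + e) :=
    Finset.single_le_sum (f := fun d => Nat.count (fun k => instr ρ ω (x + e - d) k = d)
      ((walk n hn 0 ρ ω t).2 (x + e - d))) (fun _ _ => Nat.zero_le _) he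
  rw [add_sub_cancel_right] at h2
  have h3 := Nat.count_monotone (fun k => instr ρ ω x k = e) ht
  have h4 := occ_le (walk n hn 0 ρ ω t).1 (x + e)
  omega

lemma unbounded_all (hg : Good ρ ω) (h0 : ∀ m, ∃ t, m ≤ (walk n hn 0 ρ ω t).2 0) (v : Z2) :
    ∀ m, ∃ t, m ≤ (walk n hn 0 ρ ω t).2 v := by
  have hstep := fun x e he => unbounded_step n hn ρ ω hg x e he
  have hrow : ∀ a : ℤ, ∀ m, ∃ t, m ≤ (walk n hn 0 ρ ω t).2 (a, 0) := by
    intro a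
    induction a using Int.induction_on with
    | zero => exact h0
    | succ i ih =>
      have := hstep _ (1, 0) (by decide) ih
      simpa using this
    | pred i ih =>
      have := hstep _ (-1, 0) (by decide) ih
      simpa [sub_eq_add_neg] using this
  obtain ⟨a, b⟩ := v
  induction b using Int.induction_on with
  | zero => exact hrow a
  | succ i ih =>
    have := hstep _ (0, 1) (by decide) ih
    simpa using this
  | pred i ih =>
    have := hstep _ (0, -1) (by decide) ih
    simpa [sub_eq_add_neg] using this

lemma visits_infinite (v : Z2) (h : ∀ m, ∃ t, m ≤ (walk n hn 0 ρ ω t).2 v) :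
    {t : ℕ | ∃ i, (walk n hn 0 ρ ω t).1 i = v}.Infinite := by
  refine Set.infinite_of_not_bddAbove ?_
  rintro ⟨B, hB⟩
  -- After the last visit to `v` the odometer at `v` no longer changes.
  have hconst : ∀ t, (walk n hn 0 ρ ω t).2 v ≤ (walk n hn 0 ρ ω (B + 1)).2 v := by
    intro t
    rcases le_total t (B + 1) with ht | ht
    · exact odo_mono n hn 0 ρ ω v ht
    · induction t, ht using Nat.le_induction with
      | base => exact le_rfl
      | succ t ht ih =>
        rw [walk_move n hn 0 ρ ω t _ rfl (bdry_zero _)]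
        dsimp only
        rw [Function.update_of_ne]
        · exact ih
        · intro hv
          have : t ≤ B := hB ⟨active n hn t, hv.symm⟩
          omega
  obtain ⟨t, ht⟩ := h ((walk n hn 0 ρ ω (B + 1)).2 v + 1)
  have := hconst t
  omega

lemma odo_unbounded (v : Z2)
    (h : {t : ℕ | ∃ i, (walk n hn 0 ρ ω t).1 i = v}.Infinite) (m : ℕ) :
    ∃ t, m ≤ (walk n hn 0 ρ ω t).2 v := by
  induction m with
  | zero => exact ⟨0, Nat.zero_le _⟩
  | succ m ih =>
    obtain ⟨t, ht⟩ := ih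
    obtain ⟨t1, ⟨i, hi⟩, htt⟩ := h.exists_gt t
    obtain ⟨t2, ht2⟩ := depart n hn ρ ω t1 i v hi
    have := odo_mono n hn 0 ρ ω v htt.le
    simp only at this
    exact ⟨t2, by omega⟩

/-- On good stacks, all vertices are visited infinitely often exactly when the origin is
returned to infinitely often. -/
lemma recurrent_iff (hg : Good ρ ω) :
    (∀ v : Z2, {t : ℕ | ∃ i, (walk n hn 0 ρ ω t).1 i = v}.Infinite) ↔
      ∀ k, ∃ t, k ≤ arr ρ ω (walk n hn 0 ρ ω t).2 0 := by
  constructor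
  · intro h k
    obtain ⟨t, ht⟩ := odo_unbounded n hn ρ ω 0 (h 0) (k + n)
    have := balance n hn 0 ρ ω t 0
    rw [if_pos rfl] at this
    exact ⟨t, by omega⟩
  · intro h v
    refine visits_infinite n hn ρ ω v (unbounded_all n hn ρ ω hg (fun m => ?_) v)
    obtain ⟨t, ht⟩ := h m
    have := balance n hn 0 ρ ω t 0
    have h4 := occ_le (walk n hn 0 ρ ω t).1 0
    rw [if_pos rfl] at this
    exact ⟨t, by omega⟩

end walk

/-! ### The law of the stack-driven walk -/

/-- The odometer reconstructed from a trajectory `c`: the number of departures from each vertex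
during the first `t` turns, where a turn of a frozen walker is no departure. -/
noncomputable def cod (n : ℕ) (hn : 0 < n) (r : ℝ) (ρ : Config) (c : Path) : ℕ → Z2 → ℕ
  | 0 => fun _ => 0
  | t + 1 =>
    let x := (fseq n hn r ρ c t).1 (active n hn t)
    open Classical in
    if x ∈ bdry r then cod n hn r ρ c t else
      Function.update (cod n hn r ρ c t) x (cod n hn r ρ c t x + 1)

section law
variable (n : ℕ) (hn : 0 < n) (r : ℝ) (ρ : Config) (ω : Stack)

lemma dirOf_label (x : Z2) (h s : Bool) :
    (if (x + dirOf h s).2 = x.2 then true else false) = h := by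
  cases h <;> cases s <;> simp [dirOf]

lemma walk_eq_of_out (c : Path) (t : ℕ) (h : ∀ s < t, out n hn r ρ ω s = c s) :
    walk n hn r ρ ω t = ((fseq n hn r ρ c t).1, cod n hn r ρ c t) ∧
      ∀ x, lab ρ ω x (cod n hn r ρ c t x) = (fseq n hn r ρ c t).2 x := by
  induction t with
  | zero => exact ⟨rfl, fun x => rfl⟩
  | succ t ih =>
    obtain ⟨h1, h2⟩ := ih fun s hs => h s (by omega)
    have h3 := h t (by omega)
    rw [out] at h3
    by_cases hb : (fseq n hn r ρ c t).1 (active n hn t) ∈ bdry r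
    · rw [walk_frozen n hn r ρ ω t (by rw [h1]; exact hb), fseq, fapply, if_pos hb, cod,
        if_pos hb]
      exact ⟨h1, h2⟩
    · rw [walk_move n hn r ρ ω t _ (by rw [h1]) hb] at h3 ⊢
      simp only [Function.update_self] at h3
      rw [fseq, fapply, if_neg hb, cod, if_neg hb, apply', ← h3]
      simp only [h1]
      refine ⟨trivial, fun x => ?_⟩
      generalize (fseq n hn r ρ c t).1 (active n hn t) = z
      rw [instr, dirOf_label]
      by_cases hx : x = z
      · subst hx; simp
      · simp only [Function.update_of_ne hx]
        exact h2 x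

lemma fseq_out (t : ℕ) :
    (fseq n hn r ρ (out n hn r ρ ω) t).1 = (walk n hn r ρ ω t).1 := by
  rw [(walk_eq_of_out n hn r ρ ω (out n hn r ρ ω) t fun _ _ => rfl).1]

lemma fseq_congr {y c : Path} (t : ℕ) (h : ∀ s < t, y s = c s) :
    fseq n hn r ρ y t = fseq n hn r ρ c t := by
  induction t with
  | zero => rfl
  | succ t ih => rw [fseq, fseq, ih fun s hs => h s (by omega), h t (by omega)]

lemma out_eq_iff (c : Path) (t : ℕ) (h : ∀ s < t, out n hn r ρ ω s = c s)
    (x : Z2) (hx : (fseq n hn r ρ c t).1 (active n hn t) = x) :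
    (x ∈ bdry r → (out n hn r ρ ω t = c t ↔ c t = x)) ∧
    (x ∉ bdry r → (out n hn r ρ ω t = c t ↔ x + dirOf (xor ((fseq n hn r ρ c t).2 x)
      (ω (x, cod n hn r ρ c t x)).1) (ω (x, cod n hn r ρ c t x)).2 = c t)) := by
  obtain ⟨h1, h2⟩ := walk_eq_of_out n hn r ρ ω c t h
  have hx' : (walk n hn r ρ ω t).1 (active n hn t) = x := by rw [h1]; exact hx
  rw [out]
  constructor
  · intro hb
    rw [walk_frozen n hn r ρ ω t (by rwa [hx']), hx', eq_comm]
  · intro hb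
    rw [walk_move n hn r ρ ω t x hx' hb]
    simp only [Function.update_self]
    rw [h1, instr, lab, h2]

end law

section measure
variable (q : ℝ) (hq : q ∈ Set.Ioc (0 : ℝ) 1)

/-- The law of a single stack entry: a flip with probability `q` and an independent fair
sign. -/
noncomputable def instrPMF : PMF (Bool × Bool) :=
  PMF.ofFintype (fun a => ENNReal.ofReal ((if a.1 then q else 1 - q) / 2)) (by
    have h1 := hq.1
    have h2 := hq.2
    simp only [Fintype.sum_prod_type, Fintype.sum_bool, if_true, Bool.false_eq_true, if_false]
    rw [← ENNReal.ofReal_add (by linarith) (by linarith),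
      ← ENNReal.ofReal_add (by linarith) (by linarith),
      ← ENNReal.ofReal_add (by linarith) (by linarith), ← ENNReal.ofReal_one]
    congr 1
    ring)

/-- The law of the stacks: all entries are independent with law `instrPMF`. -/
noncomputable def stackLaw : Measure Stack :=
  Measure.infinitePi fun _ : Z2 × ℕ => (instrPMF q hq).toMeasure

instance : IsProbabilityMeasure (stackLaw q hq) := by
  unfold stackLaw; infer_instance

lemma instr_weight (n : ℕ) (s : State n) (i : Fin n) (x y : Z2) (hx : s.1 i = x) :
    (instrPMF q hq).toMeasure {a | x + dirOf (xor (s.2 x) a.1) a.2 = y} =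
      weight q n s i y := by
  classical
  rw [PMF.toMeasure_apply_fintype, weight, hx]
  obtain ⟨z, rfl⟩ : ∃ z, y = x + z := ⟨y - x, by abel⟩
  have e1 : x - (1, 0) = x + (-1, 0) := by rw [sub_eq_add_neg]; rfl
  have e2 : x - (0, 1) = x + (0, -1) := by rw [sub_eq_add_neg]; rfl
  simp only [e1, e2, add_right_inj]
  have e3 : ∀ h t : Bool, (x + dirOf h t = x + z) ↔ dirOf h t = z := by
    intro h t; exact add_right_inj x
  simp only [Fintype.sum_prod_type, Fintype.sum_bool, Set.indicator_apply, Set.mem_ofPred_eq,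
    instrPMF, PMF.ofFintype_apply]
  by_cases hz : z ∈ dirs
  · simp only [dirs, Finset.mem_insert, Finset.mem_singleton] at hz
    rcases hz with rfl | rfl | rfl | rfl <;> cases s.2 x <;> simp [dirOf]
  · have h0 : ∀ h t, dirOf h t ≠ z := fun h t hh => hz (hh ▸ dirOf_mem h t)
    simp only [dirs, Finset.mem_insert, Finset.mem_singleton, not_or] at hz
    simp [h0, hz]

variable (n : ℕ) (hn : 0 < n) (r : ℝ) (ρ : Config)

/-- The probability that the stack-driven walk follows `c` for `t` turns, and at the same
time stack entries not yet used by then lie in prescribed sets. Carrying the unused entries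
along makes the induction on `t` use only the product formula for boxes. -/
lemma law_aux (c : Path) (t : ℕ) :
    MeasurableSet {ω : Stack | ∀ s < t, out n hn r ρ ω s = c s} ∧
    ∀ (K : Finset (Z2 × ℕ)) (B : Z2 × ℕ → Set (Bool × Bool)),
      (∀ i ∈ K, cod n hn r ρ c t i.1 ≤ i.2) →
      stackLaw q hq ({ω : Stack | ∀ s < t, out n hn r ρ ω s = c s} ∩ Set.pi K B) =
        (∏ s ∈ Finset.range t, fweight q n r (fseq n hn r ρ c s) (active n hn s) (c s)) *
          ∏ i ∈ K, (instrPMF q hq).toMeasure (B i) := by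
  classical
  induction t with
  | zero =>
    refine ⟨by simp, fun K B _ => ?_⟩
    have := Measure.infinitePi_pi (μ := fun _ : Z2 × ℕ => (instrPMF q hq).toMeasure) (s := K)
      (t := B) fun i _ => (Set.toFinite (B i)).measurableSet
    simpa only [stackLaw, Nat.not_lt_zero, IsEmpty.forall_iff, implies_true, Set.ofPred_true,
      Set.univ_inter, Finset.range_zero, Finset.prod_empty, one_mul] using this
  | succ t ih =>
    obtain ⟨hm, ih⟩ := ih
    set E := {ω : Stack | ∀ s < t, out n hn r ρ ω s = c s} with hE
    generalize hx : (fseq n hn r ρ c t).1 (active n hn t) = x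
    have hsucc : {ω : Stack | ∀ s < t + 1, out n hn r ρ ω s = c s} =
        E ∩ {ω | out n hn r ρ ω t = c t} := by
      ext ω
      simp only [hE, Set.mem_ofPred_eq, Set.mem_inter_iff, Nat.lt_succ_iff_lt_or_eq]
      exact ⟨fun h => ⟨fun s hs => h s (Or.inl hs), h t (Or.inr rfl)⟩,
        fun h s hs => hs.elim (h.1 s) fun e => e ▸ h.2⟩
    rw [hsucc]
    have hiff := fun ω (hω : ω ∈ E) => out_eq_iff n hn r ρ ω c t hω x hx
    simp only [Finset.prod_range_succ]
    by_cases hb : x ∈ bdry r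
    · by_cases hc : c t = x
      · have : E ∩ {ω | out n hn r ρ ω t = c t} = E :=
          Set.inter_eq_left.2 fun ω hω => ((hiff ω hω).1 hb).2 hc
        rw [this]
        refine ⟨hm, fun K B hK => ?_⟩
        rw [cod] at hK
        simp only [hx, if_pos hb] at hK
        rw [ih K B hK, fweight, hx, if_pos hb, if_pos hc, mul_one]
      · have : E ∩ {ω | out n hn r ρ ω t = c t} = ∅ := by
          ext ω
          simp only [Set.mem_inter_iff, Set.mem_empty_iff_false, iff_false, not_and]
          exact fun hω h => hc (((hiff ω hω).1 hb).1 h)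
        rw [this]
        refine ⟨MeasurableSet.empty, fun K B hK => ?_⟩
        rw [fweight, hx, if_pos hb, if_neg hc]
        simp
    · set k := cod n hn r ρ c t x
      set A : Set (Bool × Bool) :=
        {a | x + dirOf (xor ((fseq n hn r ρ c t).2 x) a.1) a.2 = c t} with hA
      have : E ∩ {ω | out n hn r ρ ω t = c t} = E ∩ {ω | ω (x, k) ∈ A} := by
        ext ω
        exact and_congr_right fun hω => (hiff ω hω).2 hb
      rw [this]
      refine ⟨hm.inter ((measurable_pi_apply (x, k)) (Set.toFinite A).measurableSet),
        fun K B hK => ?_⟩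
      rw [cod] at hK
      simp only [hx, if_neg hb] at hK
      have hnot : (x, k) ∉ K := fun h => by
        have := hK _ h
        simp [k] at this
      have hset : E ∩ {ω | ω (x, k) ∈ A} ∩ Set.pi K B =
          E ∩ Set.pi (insert (x, k) K : Finset _) (Function.update B (x, k) A) := by
        rw [Set.inter_assoc]
        congr 1
        ext ω
        simp only [Set.mem_inter_iff, Set.mem_ofPred_eq, Set.mem_pi, Finset.coe_insert,
          Set.mem_insert_iff, forall_eq_or_imp, Function.update_self]
        refine and_congr_right fun _ => forall₂_congr fun i hi => ?_
        rw [Function.update_of_ne]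
        rintro rfl
        exact hnot hi
      rw [hset, ih, Finset.prod_insert hnot, Function.update_self, fweight, hx, if_neg hb,
        hA, instr_weight q hq n _ _ x (c t) hx, mul_assoc]
      · congr 2
        refine Finset.prod_congr rfl fun i hi => ?_
        rw [Function.update_of_ne]
        rintro rfl
        exact hnot hi
      · intro i hi
        rcases Finset.mem_insert.1 hi with rfl | hi
        · exact le_rfl
        · refine le_trans ?_ (hK i hi)
          by_cases h : i.1 = x
          · rw [h]; simp
          · rw [Function.update_of_ne h]

/-! ### Uniqueness of the law -/

/-- Extension of a prefix of length `t` to a trajectory, by the value `0`. -/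
def extend (t : ℕ) (a : Finset.range t → Z2) : Path :=
  fun s => if h : s ∈ Finset.range t then a ⟨s, h⟩ else 0

lemma restrict_preimage (t : ℕ) (a : Finset.range t → Z2) :
    (fun y : Path => (Finset.range t).restrict y) ⁻¹' {a} =
      {y : Path | ∀ s < t, y s = extend t a s} := by
  ext y
  simp only [Set.mem_preimage, Set.mem_singleton_iff, Set.mem_ofPred_eq, funext_iff,
    Subtype.forall, Finset.restrict]
  refine forall_congr' fun s => ?_
  simp only [Finset.mem_range]
  refine forall_congr' fun hs => ?_
  simp [extend, hs]

lemma measurable_of_cylinders {Ω : Type*} [MeasurableSpace Ω] (f : Ω → Path)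
    (h : ∀ (t : ℕ) (c : Path), MeasurableSet {ω | ∀ s < t, f ω s = c s}) : Measurable f := by
  refine measurable_pi_iff.2 fun s => ?_
  have h1 : Measurable fun ω => (Finset.range (s + 1)).restrict (f ω) := by
    refine measurable_to_countable' fun a => ?_
    have := h (s + 1) (extend (s + 1) a)
    have h2 := congrArg (fun S => f ⁻¹' S) (restrict_preimage (s + 1) a)
    rw [← Set.preimage_comp] at h2
    exact h2.symm ▸ this
  exact (measurable_pi_apply (⟨s, by simp⟩ : Finset.range (s + 1))).comp h1

/-- Sets of trajectories determined by finitely many coordinates are measurable. -/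
lemma measurable_of_local (S : Set Path) (t : ℕ)
    (h : ∀ y c : Path, (∀ s < t, y s = c s) → c ∈ S → y ∈ S) : MeasurableSet S := by
  have : S = (Finset.range t).restrict ⁻¹' {a | extend t a ∈ S} := by
    ext y
    have hy : ∀ s < t, y s = extend t ((Finset.range t).restrict y) s := by
      intro s hs
      simp [extend, hs]
    exact ⟨fun hS => h _ y (fun s hs => (hy s hs).symm) hS, fun hS => h y _ hy hS⟩
  rw [this]
  exact (Finset.measurable_restrict _) (Set.to_countable _).measurableSet

/-- A law on trajectories is determined by the probabilities of finite prefixes. -/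
lemma law_unique (μ ν : Measure Path) [IsProbabilityMeasure μ] [IsProbabilityMeasure ν]
    (h : ∀ (t : ℕ) (c : Path), μ {y | ∀ s < t, y s = c s} = ν {y | ∀ s < t, y s = c s}) :
    μ = ν := by
  have hrange : ∀ t : ℕ, μ.map (Finset.range t).restrict = ν.map (Finset.range t).restrict := by
    intro t
    refine Measure.ext_of_singleton fun a => ?_
    rw [Measure.map_apply (Finset.measurable_restrict _) (measurableSet_singleton _),
      Measure.map_apply (Finset.measurable_restrict _) (measurableSet_singleton _),
      restrict_preimage, h]
  have : ∀ I : Finset ℕ, IsFiniteMeasure (ν.map I.restrict) := fun I => inferInstance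
  refine IsProjectiveLimit.unique (P := fun I : Finset ℕ => ν.map I.restrict)
    (fun I => ?_) (fun I => rfl)
  obtain ⟨t, ht⟩ : ∃ t, I ⊆ Finset.range t := I.exists_nat_subset_range
  have hcomp : (I.restrict : Path → _) =
      Finset.restrict₂ (π := fun _ => Z2) ht ∘ (Finset.range t).restrict := rfl
  change μ.map I.restrict = ν.map I.restrict
  rw [hcomp, ← Measure.map_map (Finset.measurable_restrict₂ _) (Finset.measurable_restrict _),
    ← Measure.map_map (Finset.measurable_restrict₂ _) (Finset.measurable_restrict _), hrange]

lemma out_measurable : Measurable (out n hn r ρ) :=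
  measurable_of_cylinders _ fun t c =>
    (law_aux (1 : ℝ) ⟨one_pos, le_rfl⟩ n hn r ρ c t).1

/-- The stack-driven walk realizes the law of the frozen walk, for every radius on the same
probability space. -/
lemma frozenLaw_eq (μ : Measure Path) [IsProbabilityMeasure μ]
    (h : IsFrozenLaw q n hn r ρ μ) : μ = (stackLaw q hq).map (out n hn r ρ) := by
  have hm := out_measurable n hn r ρ
  have := Measure.isProbabilityMeasure_map (μ := stackLaw q hq) hm.aemeasurable
  refine law_unique _ _ fun t c => ?_
  have hS : MeasurableSet {y : Path | ∀ s < t, y s = c s} :=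
    measurable_of_local _ t fun y d hyd hd s hs => (hyd s hs).trans (hd s hs)
  rw [h, Measure.map_apply hm hS]
  have := (law_aux q hq n hn r ρ c t).2 ∅ (fun _ => Set.univ) (by simp)
  simp only [Finset.coe_empty, Set.empty_pi, Set.inter_univ, Finset.prod_empty,
    mul_one] at this
  rw [← this]
  rfl

/-! ### Almost all stacks are good -/

/-- A double flip with a fixed sign, at the entries `2j` and `2j+1` of the stack of `x`. -/
def doubleFlip (x : Z2) (b : Bool) (j : ℕ) : Set Stack :=
  {ω | ω (x, 2 * j) = (true, b) ∧ ω (x, 2 * j + 1) = (true, b)}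

/-- During a double flip the label takes both values, so both steps with sign `b` occur. -/
lemma doubleFlip_hit {ω : Stack} {x : Z2} {b : Bool} {j : ℕ} (h : ω ∈ doubleFlip x b j)
    (a : Bool) : ∃ k ≥ 2 * j, instr ρ ω x k = dirOf a b := by
  obtain ⟨h1, h2⟩ := h
  by_cases hl : lab ρ ω x (2 * j) = a
  · refine ⟨2 * j + 1, by omega, ?_⟩
    rw [instr, lab, lab, h1, h2, hl]
    simp
  · refine ⟨2 * j, le_rfl, ?_⟩
    rw [instr, lab, h1]
    have : (xor (lab ρ ω x (2 * j)) true) = a := by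
      revert hl; cases lab ρ ω x (2 * j) <;> cases a <;> simp
    rw [this]

lemma doubleFlip_inter (x : Z2) (b : Bool) (S : Finset ℕ) :
    stackLaw q hq (⋂ j ∈ S, doubleFlip x b j) =
      ∏ _j ∈ S, (instrPMF q hq).toMeasure {(true, b)} ^ 2 := by
  classical
  let K : Finset (Z2 × ℕ) := S.biUnion fun j => {(x, 2 * j), (x, 2 * j + 1)}
  have hset : (⋂ j ∈ S, doubleFlip x b j) = Set.pi K fun _ => {(true, b)} := by
    ext ω
    simp only [doubleFlip, Set.mem_iInter, Set.mem_ofPred_eq, Set.mem_pi, K,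
      Finset.coe_biUnion, Set.mem_iUnion, Finset.mem_coe, Set.mem_singleton_iff,
      Finset.coe_insert, Finset.coe_singleton, Set.mem_insert_iff]
    constructor
    · rintro h i ⟨j, hj, rfl | rfl⟩
      exacts [(h j hj).1, (h j hj).2]
    · intro h j hj
      exact ⟨h _ ⟨j, hj, Or.inl rfl⟩, h _ ⟨j, hj, Or.inr rfl⟩⟩
  have hdisj : (S : Set ℕ).PairwiseDisjoint
      fun j => ({(x, 2 * j), (x, 2 * j + 1)} : Finset (Z2 × ℕ)) := by
    intro j _ j' _ hjj
    simp only [Function.onFun, Finset.disjoint_left, Finset.mem_insert, Finset.mem_singleton]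
    rintro i (rfl | rfl) <;> simp <;> omega
  rw [hset, stackLaw, Measure.infinitePi_pi _ (fun i _ => measurableSet_singleton _),
    Finset.prod_biUnion hdisj]
  refine Finset.prod_congr rfl fun j _ => ?_
  rw [Finset.prod_pair (by simp), sq]

lemma good_ae : ∀ᵐ ω ∂(stackLaw q hq), Good ρ ω := by
  have key : ∀ (x : Z2) (b : Bool), ∀ᵐ ω ∂(stackLaw q hq),
      ∀ m, ∃ j ≥ m, ω ∈ doubleFlip x b j := by
    intro x b
    have hcoord : ∀ k, MeasurableSet {ω : Stack | ω (x, k) = (true, b)} := fun k =>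
      (measurable_pi_apply (X := fun _ : Z2 × ℕ => Bool × Bool) (x, k))
        (measurableSet_singleton (true, b))
    have hmeas : ∀ j, MeasurableSet (doubleFlip x b j) := fun j =>
      (hcoord (2 * j)).inter (hcoord (2 * j + 1))
    have hone : ∀ j, stackLaw q hq (doubleFlip x b j) =
        (instrPMF q hq).toMeasure {(true, b)} ^ 2 := by
      intro j
      have := doubleFlip_inter q hq x b {j}
      simpa using this
    have hind : ProbabilityTheory.iIndepSet (doubleFlip x b) (stackLaw q hq) := by
      rw [ProbabilityTheory.iIndepSet_iff_meas_biInter hmeas]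
      intro S
      rw [doubleFlip_inter]
      exact Finset.prod_congr rfl fun j _ => (hone j).symm
    have hlim := ProbabilityTheory.measure_limsup_eq_one hmeas hind (by
      simp only [hone]
      refine ENNReal.tsum_const_eq_top_of_ne_zero ?_
      rw [PMF.toMeasure_apply_singleton _ _ (measurableSet_singleton _)]
      have := hq.1
      simp [instrPMF, this])
    have hmem : ∀ᵐ ω ∂(stackLaw q hq), ω ∈ limsup (doubleFlip x b) atTop :=
      (mem_ae_iff_prob_eq_one (MeasurableSet.measurableSet_limsup hmeas)).2 hlim
    filter_upwards [hmem] with ω hω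
    rw [mem_limsup_iff_frequently_mem, frequently_atTop] at hω
    exact hω
  have key' : ∀ᵐ ω ∂(stackLaw q hq), ∀ (x : Z2) (b : Bool), ∀ m, ∃ j ≥ m,
      ω ∈ doubleFlip x b j :=
    ae_all_iff.2 fun x => ae_all_iff.2 fun b => key x b
  filter_upwards [key'] with ω hω x e he m
  obtain ⟨a, b, rfl⟩ : ∃ a b, e = dirOf a b := by
    revert e; decide
  obtain ⟨j, hj, hd⟩ := hω x b m
  obtain ⟨k, hk, hik⟩ := doubleFlip_hit ρ hd a
  exact ⟨k, by omega, hik⟩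

/-! ### Passage to the limit -/

/-- The event that the stack-driven walk makes at least `k` returns. -/
def retEvent (r : ℝ) (k : ℕ) : Set Stack :=
  {ω | ∃ t, k ≤ arr ρ ω (walk n hn r ρ ω t).2 0}

lemma returns_out (ω : Stack) (t : ℕ) :
    returns n (fun u => fseq n hn r ρ (out n hn r ρ ω) u) t =
      arr ρ ω (walk n hn r ρ ω t).2 0 :=
  returns_eq n hn r ρ ω _ (fun u => fseq_out n hn r ρ ω u) t

lemma returns_congr {y c : Path} (t : ℕ) (h : ∀ s < t, y s = c s) :
    returns n (fun u => fseq n hn r ρ y u) t = returns n (fun u => fseq n hn r ρ c u) t := by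
  classical
  unfold returns
  congr 1
  refine Finset.filter_congr fun s hs => ?_
  rw [Finset.mem_Icc] at hs
  dsimp only
  rw [fseq_congr n hn r ρ s fun u hu => h u (by omega),
    fseq_congr n hn r ρ (s - 1) fun u hu => h u (by omega)]

lemma returns_set_measurable (k t : ℕ) :
    MeasurableSet {y : Path | k ≤ returns n (fun u => fseq n hn r ρ y u) t} := by
  refine measurable_of_local _ t fun y c hyc hc => ?_
  rw [Set.mem_ofPred_eq, returns_congr n hn r ρ t hyc]
  exact hc

lemma stack_event_measurable (k t : ℕ) :
    MeasurableSet {ω : Stack | k ≤ arr ρ ω (walk n hn r ρ ω t).2 0} := by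
  have := out_measurable n hn r ρ (returns_set_measurable n hn r ρ k t)
  simpa only [Set.preimage_ofPred_eq, returns_out] using this

lemma retEvent_measurable (k : ℕ) : MeasurableSet (retEvent n hn ρ r k) := by
  have : retEvent n hn ρ r k = ⋃ t, {ω : Stack | k ≤ arr ρ ω (walk n hn r ρ ω t).2 0} := by
    ext ω; simp [retEvent]
  rw [this]
  exact MeasurableSet.iUnion fun t => stack_event_measurable n hn r ρ k t

lemma tendsto_retEvent (k : ℕ) :
    Tendsto (fun t => (stackLaw q hq {ω | k ≤ arr ρ ω (walk n hn r ρ ω t).2 0}).toReal) atTop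
      (nhds (stackLaw q hq (retEvent n hn ρ r k)).toReal) := by
  have hU : retEvent n hn ρ r k = ⋃ t, {ω : Stack | k ≤ arr ρ ω (walk n hn r ρ ω t).2 0} := by
    ext ω; simp [retEvent]
  rw [hU]
  refine (ENNReal.tendsto_toReal (measure_ne_top _ _)).comp (tendsto_measure_iUnion_atTop ?_)
  intro t t' htt ω hω
  exact le_trans hω (arr_mono ρ ω (fun x => odo_mono n hn r ρ ω x htt) 0)

lemma returnProb_eq (μ : Measure Path) (hμ : μ = (stackLaw q hq).map (out n hn r ρ)) (k : ℕ) :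
    returnProb n hn r ρ μ k = (stackLaw q hq (retEvent n hn ρ r k)).toReal := by
  rw [returnProb]
  refine Tendsto.limUnder_eq ?_
  convert! tendsto_retEvent q hq n hn r ρ k using 4 with t
  rw [hμ, Measure.map_apply (out_measurable n hn r ρ) (returns_set_measurable n hn r ρ k t)]
  simp only [Set.preimage_ofPred_eq, returns_out]

lemma retEvent_subset (k : ℕ) : retEvent n hn ρ r k ⊆ retEvent n hn ρ 0 k := by
  rintro ω ⟨T, hT⟩
  obtain ⟨t, ht⟩ := odo_le n hn r ρ ω T
  exact ⟨t, hT.trans (arr_mono ρ ω ht 0)⟩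

/-- As `r → ∞` the return probabilities of the frozen walks converge to that of the unfrozen
walk: they are bounded by it through the least action principle, and a number of returns
reached by the unfrozen walk by time `t` is also reached by every frozen walk with `r ≥ t`. -/
lemma tendsto_radius (k : ℕ) :
    Tendsto (fun r : ℕ => (stackLaw q hq (retEvent n hn ρ (r : ℝ) k)).toReal) atTop
      (nhds (stackLaw q hq (retEvent n hn ρ 0 k)).toReal) := by
  refine tendsto_order.2 ⟨fun a ha => ?_, fun a ha => Eventually.of_forall fun r => ?_⟩
  · obtain ⟨t, ht⟩ := ((tendsto_order.1 (tendsto_retEvent q hq n hn 0 ρ k)).1 a ha).exists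
    filter_upwards [eventually_ge_atTop t] with r hr
    refine ht.trans_le (ENNReal.toReal_mono (measure_ne_top _ _) (measure_mono ?_))
    intro ω hω
    exact ⟨t, by rw [(walk_local n hn ρ ω r t hr).1]; exact hω⟩
  · exact lt_of_le_of_lt (ENNReal.toReal_mono (measure_ne_top _ _)
      (measure_mono (retEvent_subset n hn _ ρ k))) ha

lemma tendsto_level :
    Tendsto (fun k : ℕ => (stackLaw q hq (retEvent n hn ρ 0 k)).toReal) atTop
      (nhds (stackLaw q hq (⋂ k, retEvent n hn ρ 0 k)).toReal) := by
  refine (ENNReal.tendsto_toReal (measure_ne_top _ _)).comp (tendsto_measure_iInter_atTop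
    (fun k => (retEvent_measurable n hn 0 ρ k).nullMeasurableSet) ?_ ⟨0, measure_ne_top _ _⟩)
  rintro k k' hkk ω ⟨t, ht⟩
  exact ⟨t, hkk.trans ht⟩

lemma recurrent_measurable : MeasurableSet {y : Path | Recurrent n hn ρ y} := by
  have hset : {y : Path | Recurrent n hn ρ y} =
      ⋂ v : Z2, ⋂ m : ℕ, ⋃ t : ℕ, ⋃ _ : m ≤ t, {y | ∃ i, (fseq n hn 0 ρ y t).1 i = v} := by
    ext y
    simp only [Recurrent, Set.mem_ofPred_eq, Set.mem_iInter, Set.mem_iUnion, fseq_zero,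
      exists_prop]
    refine forall_congr' fun v => ?_
    rw [← Nat.frequently_atTop_iff_infinite, frequently_atTop]
  rw [hset]
  refine MeasurableSet.iInter fun v => MeasurableSet.iInter fun m => MeasurableSet.iUnion
    fun t => MeasurableSet.iUnion fun _ => measurable_of_local _ t fun y c hyc hc => ?_
  rw [Set.mem_ofPred_eq, fseq_congr n hn 0 ρ t hyc]
  exact hc

lemma recurrent_prob (μ : Measure Path) (hμ : μ = (stackLaw q hq).map (out n hn 0 ρ)) :
    μ {y | Recurrent n hn ρ y} = stackLaw q hq (⋂ k, retEvent n hn ρ 0 k) := by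
  rw [hμ, Measure.map_apply (out_measurable n hn 0 ρ) (recurrent_measurable n hn ρ)]
  refine measure_congr (eventuallyEq_set.2 ?_)
  filter_upwards [good_ae q hq ρ] with ω hω
  have h := recurrent_iff n hn ρ ω hω
  have hrec : Recurrent n hn ρ (out n hn 0 ρ ω) ↔
      ∀ v : Z2, {t : ℕ | ∃ i, (walk n hn 0 ρ ω t).1 i = v}.Infinite := by
    simp only [Recurrent, ← fseq_zero, fseq_out]
  rw [Set.mem_iInter]
  exact hrec.trans h

lemma isLaw_frozen (μ : Measure Path) (h : IsLaw q n hn ρ μ) : IsFrozenLaw q n hn 0 ρ μ := by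
  intro t c
  rw [h]
  refine Finset.prod_congr rfl fun s _ => ?_
  rw [fweight, if_neg (bdry_zero _), fseq_zero]

end measure

end HV

/-- **Lemma (recurrence probability as an iterated limit of return probabilities).**
Let `q ∈ (0,1]` and `n ≥ 1`.  For the `n`-walker `H`–`V` walk with any initial label
configuration `ρ`,
`p_rec(ρ) = lim_{k→∞} lim_{r→∞} p_{k,r}(ρ)`. -/
theorem hv_recurrence_prob_eq_limit_return_probs
    (q : ℝ) (hq : q ∈ Set.Ioc (0 : ℝ) 1) (n : ℕ) (hn : 0 < n) (ρ : HV.Config)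
    (μ : MeasureTheory.Measure HV.Path) [MeasureTheory.IsProbabilityMeasure μ]
    (hμ : HV.IsLaw q n hn ρ μ)
    (μF : ℕ → MeasureTheory.Measure HV.Path)
    (hFprob : ∀ r, MeasureTheory.IsProbabilityMeasure (μF r))
    (hμF : ∀ r : ℕ, HV.IsFrozenLaw q n hn (r : ℝ) ρ (μF r)) :
    (μ {y | HV.Recurrent n hn ρ y}).toReal =
      limUnder Filter.atTop fun k : ℕ =>
        limUnder Filter.atTop fun r : ℕ => HV.returnProb n hn (r : ℝ) ρ (μF r) k := by
  rw [HV.recurrent_prob q hq n hn ρ μ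
    (HV.frozenLaw_eq q hq n hn 0 ρ μ (HV.isLaw_frozen q n hn ρ μ hμ))]
  have hprob : ∀ (r k : ℕ), HV.returnProb n hn (r : ℝ) ρ (μF r) k =
      (HV.stackLaw q hq (HV.retEvent n hn ρ (r : ℝ) k)).toReal := fun r k =>
    HV.returnProb_eq q hq n hn r ρ (μF r)
      (@HV.frozenLaw_eq q hq n hn r ρ (μF r) (hFprob r) (hμF r)) k
  simp only [hprob, (HV.tendsto_radius q hq n hn ρ _).limUnder_eq]
  exact (HV.tendsto_level q hq n hn ρ).limUnder_eq.symm
end
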